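/- An element f ∈ ℍ^{gl_n} commutes with every element of ℍ^{gl_n} if and only if f is an F-linear combination of the operators Ỹ^m with m ∈ ℤ; that is, the centre of ℍ^{gl_n} is the subalgebra generated by Ỹ and Ỹ^{−1}. -/

import Mathlib

set_option maxHeartbeats 1000000
set_option synthInstance.maxHeartbeats 1000000

noncomputable section

/-- The Laurent polynomial ring `R[X₁^{±1}, …, Xₙ^{±1}]` in `n` variables over `R`,
realised as the monoid algebra of the additive monoid `Fin n →₀ ℤ` of exponent vectors. -/
abbrev Laur (R : Type*) [CommRing R] (n : ℕ) : Type _ :=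
  AddMonoidAlgebra R (Fin n →₀ ℤ)

variable {R : Type*} [CommRing R] {n : ℕ}

/-- The monomial `c · X^a`. -/
def mono (a : Fin n →₀ ℤ) (c : R) : Laur R n := AddMonoidAlgebra.single a c

/-- The generator `X_i`. -/
def Xel (i : Fin n) : Laur R n := mono (Finsupp.single i 1) 1

/-- The element `X_i⁻¹`. -/
def XinvEl (i : Fin n) : Laur R n := mono (Finsupp.single i (-1)) 1

/-- Multiplication by a Laurent polynomial, as a linear endomorphism. -/
def mulOp (x : Laur R n) : Module.End R (Laur R n) := LinearMap.mulLeft R x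

/-- The operator of multiplication by `X_i`, with `ℕ`-indexing (`0`-based; junk value `1`
out of range). -/
def XOp (i : ℕ) : Module.End R (Laur R n) :=
  if h : i < n then mulOp (Xel ⟨i, h⟩) else 1

/-- The operator of multiplication by `X_i⁻¹`, with `ℕ`-indexing. -/
def XinvOp (i : ℕ) : Module.End R (Laur R n) :=
  if h : i < n then mulOp (XinvEl ⟨i, h⟩) else 1

/-- Ascending product `f s * f (s+1) * ⋯ * f (s+len-1)` (equal to `1` when `len = 0`). -/
def aF {M : Type*} [Monoid M] (f : ℕ → M) (s len : ℕ) : M :=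
  ((List.range' s len).map f).prod

/-- Descending product `f (s+len-1) * ⋯ * f (s+1) * f s` (equal to `1` when `len = 0`). -/
def dF {M : Type*} [Monoid M] (f : ℕ → M) (s len : ℕ) : M :=
  (((List.range' s len).map f).reverse).prod

/-- Integer power `u^z`, where `v` is a designated (two-sided) inverse of `u`. -/
def zpowOp {M : Type*} [Monoid M] (u v : M) (z : ℤ) : M :=
  if 0 ≤ z then u ^ z.toNat else v ^ (-z).toNat

/-- The generating set of the algebra `ℍ^{gl_n}`: the operators `T_k`, `Y_i^{±1}`, and
`e_{ij}` for `i ≠ j` (all `0`-based). -/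
def HglSet {R : Type*} [CommRing R] {n : ℕ} (T Y Yi : ℕ → Module.End R (Laur R n))
    (e : ℕ → ℕ → Module.End R (Laur R n)) : Set (Module.End R (Laur R n)) :=
  {f | (∃ k, k + 1 < n ∧ f = T k) ∨ (∃ i, i < n ∧ f = Y i) ∨ (∃ i, i < n ∧ f = Yi i)
      ∨ (∃ i j, i < n ∧ j < n ∧ i ≠ j ∧ f = e i j)}

/-!
The operators `T_k` satisfy the braid relations and the rotation `π⁻¹` shifts their indices, so a
computation in the extended affine braid group gives `Ỹ = (π⁻¹)^n`. This is the `q`-Euler operator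
`X^a ↦ q^{deg a} X^a`, which commutes with all the generators because these preserve the degree.

Conversely, let `f ∈ ℍ^{gl_n}` be central. Up to a scalar `e_{in}` is `X_i X_n⁻¹ (Y_n - Y_n⁻¹)`. The
commutator `x` of `f` with `X_i X_n⁻¹` therefore satisfies `x Y_n² = x`; now `ℍ^{gl_n}` and the
`X_i X_n⁻¹` are graded by conjugation with `X_1 ⋯ X_n`, and `Y_n` has nonzero degree, whence
`x = 0`. So `f` commutes with all monomials of degree zero, then by the formula for `T_k` with the
permutations of the variables, then, as `π⁻¹` is a rescaling followed by a permutation, with the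
rescalings `X_i ↦ q X_i`: every monomial is an eigenvector of `f`.

Finally `f` has an expansion `∑ g_σ σ` where the `g_σ` are rational functions and `σ` runs through
the automorphisms `X^a ↦ q^{κ a} X^{w a}`. Linear independence of characters shows that each `σ`
occurring fixes the monomials of degree zero, hence is a power of `Ỹ`; the eigenvector property
allows the `g_σ` to be replaced by scalars.
-/

section OrderedProducts

variable {M : Type*} [Monoid M] {f g : ℕ → M} {x : M} {s r l : ℕ}

@[simp] lemma aF_zero (f : ℕ → M) (s : ℕ) : aF f s 0 = 1 := rfl

@[simp] lemma dF_zero (f : ℕ → M) (s : ℕ) : dF f s 0 = 1 := rfl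

lemma aF_succ (f : ℕ → M) (s l : ℕ) : aF f s (l + 1) = aF f s l * f (s + l) := by
  simp [aF, List.range'_1_concat]

lemma aF_succ' (f : ℕ → M) (s l : ℕ) : aF f s (l + 1) = f s * aF f (s + 1) l := by
  simp [aF, List.range'_succ]

lemma dF_succ (f : ℕ → M) (s l : ℕ) : dF f s (l + 1) = f (s + l) * dF f s l := by
  simp [dF, List.range'_1_concat]

lemma semiconjBy_aF (h : ∀ k < l, SemiconjBy x (f (s + k)) (g (r + k))) :
    SemiconjBy x (aF f s l) (aF g r l) := by
  induction l with
  | zero => exact SemiconjBy.one_right x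
  | succ l ih =>
    rw [aF_succ, aF_succ]
    exact (ih fun k hk => h k (by omega)).mul_right (h l (by omega))

lemma semiconjBy_dF (h : ∀ k < l, SemiconjBy x (f (s + k)) (g (r + k))) :
    SemiconjBy x (dF f s l) (dF g r l) := by
  induction l with
  | zero => exact SemiconjBy.one_right x
  | succ l ih =>
    rw [dF_succ, dF_succ]
    exact (h l (by omega)).mul_right (ih fun k hk => h k (by omega))

lemma aF_mem {S : Type*} [SetLike S M] [SubmonoidClass S M] {N : S}
    (h : ∀ k < l, f (s + k) ∈ N) : aF f s l ∈ N := by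
  induction l with
  | zero => exact one_mem N
  | succ l ih =>
    rw [aF_succ]
    exact mul_mem (ih fun k hk => h k (by omega)) (h l (by omega))

lemma dF_mem {S : Type*} [SetLike S M] [SubmonoidClass S M] {N : S}
    (h : ∀ k < l, f (s + k) ∈ N) : dF f s l ∈ N := by
  induction l with
  | zero => exact one_mem N
  | succ l ih =>
    rw [dF_succ]
    exact mul_mem (h l (by omega)) (ih fun k hk => h k (by omega))

lemma dF_mul_aF_eq_one (h : ∀ k < l, f (s + k) * g (s + k) = 1) : dF f s l * aF g s l = 1 := by
  induction l with
  | zero => simp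
  | succ l ih =>
    calc dF f s (l + 1) * aF g s (l + 1)
        = f (s + l) * (dF f s l * aF g s l) * g (s + l) := by
          simp only [dF_succ, aF_succ, mul_assoc]
      _ = 1 := by rw [ih fun k hk => h k (by omega), mul_one, h l (by omega)]

lemma aF_mul_dF_eq_one (h : ∀ k < l, f (s + k) * g (s + k) = 1) : aF f s l * dF g s l = 1 := by
  induction l with
  | zero => simp
  | succ l ih =>
    calc aF f s (l + 1) * dF g s (l + 1)
        = aF f s l * (f (s + l) * g (s + l)) * dF g s l := by
          simp only [dF_succ, aF_succ, mul_assoc]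
      _ = 1 := by rw [h l (by omega), mul_one, ih fun k hk => h k (by omega)]

lemma prod_range_mul_prod_reverse_eq_one (h : ∀ i < l, f i * g i = 1) :
    ((List.range l).map f).prod * (((List.range l).map g).reverse).prod = 1 := by
  rw [List.range_eq_range']
  exact aF_mul_dF_eq_one (by simpa using h)

end OrderedProducts

section AffineBraid

variable {M : Type*} [Monoid M] {n : ℕ} {t ti : ℕ → M} {p : Mˣ}

/-- The relations of Artin's braid group on `n` strands; the generators `t k` with
`k + 1 < n` count, the other values of `t` are irrelevant. -/
structure BraidRelations (n : ℕ) (t : ℕ → M) : Prop where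
  commute : ∀ i j, i + 1 < j → j + 1 < n → Commute (t i) (t j)
  braid : ∀ i, i + 2 < n → t i * t (i + 1) * t i = t (i + 1) * t i * t (i + 1)

/-- The relations of the extended affine braid group of type `GL_n`, where `p` rotates the
Dynkin diagram and `p ^ n` is central. -/
structure AffineBraidRelations (n : ℕ) (t : ℕ → M) (p : Mˣ) : Prop extends
    BraidRelations n t where
  rotate : ∀ k, k + 2 < n → SemiconjBy (p : M) (t (k + 1)) (t k)
  pow_commute : ∀ k, k + 1 < n → Commute ((p : M) ^ n) (t k)

/-- The Cherednik element `Y_i = t_i ⋯ t_{n-2} p t_0⁻¹ ⋯ t_{i-1}⁻¹` (`0`-based), where `ti k`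
is the inverse of `t k`. -/
def cherednikElement (n : ℕ) (t ti : ℕ → M) (p : M) (i : ℕ) : M :=
  aF t i (n - 1 - i) * p * aF ti 0 i

/-- The positive braid exchanging a block of `i` strands with a block of `m` strands. -/
def blockSwap (t : ℕ → M) (m : ℕ) : ℕ → M
  | 0 => 1
  | i + 1 => aF t i m * blockSwap t m i

lemma blockSwap_zero_left (t : ℕ → M) (i : ℕ) : blockSwap t 0 i = 1 := by
  induction i with
  | zero => rfl
  | succ i ih => rw [blockSwap, aF_zero, ih, one_mul]

namespace BraidRelations

lemma aF_semiconjBy (h : BraidRelations n t) {s l k : ℕ} (hsk : s ≤ k) (hkl : k + 1 < s + l)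
    (hl : s + l < n) : SemiconjBy (aF t s l) (t k) (t (k + 1)) := by
  induction l generalizing s with
  | zero => omega
  | succ l ih =>
    rcases hsk.eq_or_lt with rfl | hsk
    · obtain ⟨l, rfl⟩ : ∃ l', l = l' + 1 := ⟨l - 1, by omega⟩
      have hfar : Commute (aF t (s + 2) l) (t s) :=
        (semiconjBy_aF fun k _ => h.commute _ _ (by omega) (by omega) :
          Commute (t s) (aF t (s + 2) l)).symm
      have hnear : SemiconjBy (t s * t (s + 1)) (t s) (t (s + 1)) := by
        rw [SemiconjBy, h.braid s (by omega), mul_assoc]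
      rw [aF_succ', aF_succ', ← mul_assoc]
      exact hnear.mul_left hfar
    · rw [aF_succ']
      exact SemiconjBy.mul_left (h.commute s (k + 1) (by omega) (by omega))
        (ih hsk (by omega) (by omega))

lemma aF_semiconjBy_aF (h : BraidRelations n t) {s l j : ℕ} (hjl : j < l) (hl : s + l < n) :
    SemiconjBy (aF t s l) (aF t s j) (aF t (s + 1) j) :=
  semiconjBy_aF fun k _ => by
    rw [Nat.add_right_comm]
    exact h.aF_semiconjBy (by omega) (by omega) hl

lemma commute_blockSwap (h : BraidRelations n t) {m i j : ℕ} (hij : i + m ≤ j)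
    (hj : j + 1 < n) : Commute (t j) (blockSwap t m i) := by
  induction i with
  | zero => exact Commute.one_right _
  | succ i ih =>
    exact (semiconjBy_aF fun k _ => (h.commute _ _ (by omega) hj).symm : Commute _ _).mul_right
      (ih (by omega))

lemma blockSwap_succ_mul_aF (h : BraidRelations n t) {m i : ℕ} (him : i + m < n) :
    blockSwap t (m + 1) i * aF t 0 m = blockSwap t m (i + 1) * dF t m i := by
  induction i with
  | zero => simp [blockSwap]
  | succ i ih =>
    calc blockSwap t (m + 1) (i + 1) * aF t 0 m
        = aF t i (m + 1) * aF t i m * blockSwap t m i * dF t m i := by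
          rw [blockSwap, mul_assoc, ih (by omega), blockSwap]
          simp only [mul_assoc]
      _ = aF t (i + 1) m * aF t i m * (t (i + m) * blockSwap t m i) * dF t m i := by
          rw [(h.aF_semiconjBy_aF m.lt_succ_self (by omega)).eq, aF_succ]
          simp only [mul_assoc]
      _ = blockSwap t m (i + 1 + 1) * dF t m (i + 1) := by
          rw [(h.commute_blockSwap le_rfl (by omega)).eq, dF_succ, blockSwap, blockSwap,
            add_comm m i]
          simp only [mul_assoc]

end BraidRelations

namespace AffineBraidRelations

lemma pow_semiconjBy (h : AffineBraidRelations n t p) {i k : ℕ} (hik : k + i + 1 < n) :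
    SemiconjBy ((p : M) ^ i) (t (k + i)) (t k) := by
  induction i with
  | zero => simp
  | succ i ih =>
    rw [pow_succ]
    exact (ih (by omega)).mul_left (h.rotate _ (by omega))

lemma pow_semiconjBy_of_add_eq (h : AffineBraidRelations n t p) {i m j : ℕ}
    (him : i + m = n) (hj : j + 1 < i) : SemiconjBy ((p : M) ^ i) (t j) (t (m + j)) := by
  have hback : SemiconjBy (↑(p ^ m)⁻¹ : M) (t j) (t (m + j)) := by
    rw [add_comm]
    exact SemiconjBy.units_inv_symm_left (by simpa using h.pow_semiconjBy (by omega))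
  have hpow : (p : M) ^ i = (p : M) ^ n * ↑(p ^ m)⁻¹ := by
    rw [← him, pow_add, mul_assoc, ← Units.val_pow_eq_pow_val p m, Units.mul_inv, mul_one]
  rw [hpow]
  exact SemiconjBy.mul_left (h.pow_commute _ (by omega)) hback

lemma prod_cherednikElement_range (h : AffineBraidRelations n t p)
    (hti : ∀ k, k + 1 < n → t k * ti k = 1) {i : ℕ} (hi : i ≤ n) :
    ((List.range i).map (cherednikElement n t ti p)).prod
      = blockSwap t (n - i) i * (p : M) ^ i := by
  induction i with
  | zero => simp [blockSwap]
  | succ i ih =>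
    obtain ⟨m, rfl⟩ : ∃ m, n = i + 1 + m := ⟨n - (i + 1), by omega⟩
    have hY : cherednikElement (i + 1 + m) t ti p i = aF t i m * p * aF ti 0 i := by
      rw [cherednikElement, show i + 1 + m - 1 - i = m by omega]
    have hrotate : SemiconjBy ((p : M) ^ i) (aF t i m) (aF t 0 m) :=
      semiconjBy_aF fun k _ => by
        simpa [add_comm] using h.pow_semiconjBy (i := i) (k := k) (by omega)
    have hwrap : SemiconjBy ((p : M) ^ (i + 1)) (dF t 0 i) (dF t m i) :=
      semiconjBy_dF fun k _ => by
        simpa using h.pow_semiconjBy_of_add_eq (i := i + 1) (m := m) rfl (by omega)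
    rw [List.range_succ, List.map_append, List.prod_append, ih (by omega), List.map_singleton,
      List.prod_singleton, hY, show i + 1 + m - i = m + 1 by omega, Nat.add_sub_cancel_left]
    calc blockSwap t (m + 1) i * (p : M) ^ i * (aF t i m * p * aF ti 0 i)
        = blockSwap t (m + 1) i * ((p : M) ^ i * aF t i m) * p * aF ti 0 i := by
          simp only [mul_assoc]
      _ = blockSwap t (m + 1) i * aF t 0 m * (p : M) ^ (i + 1) * aF ti 0 i := by
          rw [hrotate.eq, pow_succ]
          simp only [mul_assoc]
      _ = blockSwap t m (i + 1) * (dF t m i * (p : M) ^ (i + 1)) * aF ti 0 i := by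
          rw [h.blockSwap_succ_mul_aF (by omega)]
          simp only [mul_assoc]
      _ = blockSwap t m (i + 1) * (p : M) ^ (i + 1) * (dF t 0 i * aF ti 0 i) := by
          rw [← hwrap.eq]
          simp only [mul_assoc]
      _ = blockSwap t m (i + 1) * (p : M) ^ (i + 1) := by
          rw [dF_mul_aF_eq_one fun k _ => hti _ (by omega), mul_one]

theorem prod_cherednikElement (h : AffineBraidRelations n t p)
    (hti : ∀ k, k + 1 < n → t k * ti k = 1) :
    ((List.range n).map (cherednikElement n t ti p)).prod = (p : M) ^ n := by
  rw [h.prod_cherednikElement_range hti le_rfl, Nat.sub_self, blockSwap_zero_left, one_mul]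

end AffineBraidRelations

end AffineBraid

section Monomials

lemma mono_mul_mono (a b : Fin n →₀ ℤ) (r s : R) :
    mono a r * mono b s = mono (a + b) (r * s) :=
  AddMonoidAlgebra.single_mul_single ..

lemma smul_mono (a : Fin n →₀ ℤ) (r s : R) : r • mono a s = mono a (r * s) :=
  AddMonoidAlgebra.smul_single' ..

lemma mono_eq_smul (a : Fin n →₀ ℤ) (r : R) : mono a r = r • mono a 1 := by
  rw [smul_mono, mul_one]

lemma mono_add (a b : Fin n →₀ ℤ) : (mono (a + b) 1 : Laur R n) = mono a 1 * mono b 1 := by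
  rw [mono_mul_mono, one_mul]

lemma mono_zero : (mono 0 1 : Laur R n) = 1 := rfl

lemma mono_mul_mono_neg (a : Fin n →₀ ℤ) : (mono a 1 * mono (-a) 1 : Laur R n) = 1 := by
  rw [← mono_add, add_neg_cancel, mono_zero]

lemma isUnit_mono (a : Fin n →₀ ℤ) : IsUnit (mono a 1 : Laur R n) :=
  IsUnit.of_mul_eq_one _ (mono_mul_mono_neg a)

lemma mono_injective [Nontrivial R] :
    Function.Injective fun a : Fin n →₀ ℤ => (mono a 1 : Laur R n) :=
  fun _ _ h => (AddMonoidAlgebra.single_left_inj one_ne_zero).1 h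

lemma Xel_injective [Nontrivial R] :
    Function.Injective (Xel : Fin n → Laur R n) :=
  fun _ _ h => (Finsupp.single_left_inj one_ne_zero).1 (mono_injective h)

lemma linearMap_ext_mono {V : Type*} [AddCommMonoid V] [Module R V] {f g : Laur R n →ₗ[R] V}
    (h : ∀ a, f (mono a 1) = g (mono a 1)) : f = g :=
  AddMonoidAlgebra.lhom_ext' fun a => LinearMap.ext_ring (h a)

lemma algEquiv_ext_mono {σ ρ : Laur R n ≃ₐ[R] Laur R n}
    (h : ∀ a, σ (mono a 1) = ρ (mono a 1)) : σ = ρ :=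
  AlgEquiv.ext fun x => LinearMap.congr_fun
    (linearMap_ext_mono h : σ.toLinearMap = ρ.toLinearMap) x

lemma mulOp_apply (x p : Laur R n) : mulOp x p = x * p := rfl

lemma mulOp_mul (x y : Laur R n) : mulOp (x * y) = mulOp x * mulOp y :=
  LinearMap.mulLeft_mul ..

lemma mulOp_one : mulOp (1 : Laur R n) = 1 := LinearMap.mulLeft_one R _

end Monomials

section MonomialAutomorphisms

lemma domCongr_one (a : Fin n →₀ ℤ) : Finsupp.domCongr (1 : Equiv.Perm (Fin n)) a = a :=
  Finsupp.equivMapDomain_refl a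

lemma domCongr_mul (v w : Equiv.Perm (Fin n)) (a : Fin n →₀ ℤ) :
    Finsupp.domCongr (v * w) a = Finsupp.domCongr v (Finsupp.domCongr w a) :=
  Finsupp.equivMapDomain_trans w v a

lemma domCongr_ones (w : Equiv.Perm (Fin n)) :
    Finsupp.domCongr w (Finsupp.equivFunOnFinite.symm (1 : Fin n → ℤ))
      = Finsupp.equivFunOnFinite.symm 1 :=
  Finsupp.ext fun _ => rfl

/-- The automorphism of the Laurent polynomial ring permuting the variables by `w`. -/
def permAut : Equiv.Perm (Fin n) →* (Laur R n ≃ₐ[R] Laur R n) where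
  toFun w := AddMonoidAlgebra.domCongr R R (Finsupp.domCongr w)
  map_one' := algEquiv_ext_mono fun a =>
    (AddMonoidAlgebra.domCongr_single ..).trans (by rw [domCongr_one]; rfl)
  map_mul' v w := algEquiv_ext_mono fun a => by
    simp only [AlgEquiv.mul_apply, mono, AddMonoidAlgebra.domCongr_single, domCongr_mul]

lemma permAut_mono (w : Equiv.Perm (Fin n)) (a : Fin n →₀ ℤ) (r : R) :
    permAut w (mono a r) = mono (Finsupp.domCongr w a) r :=
  AddMonoidAlgebra.domCongr_single ..

lemma permAut_Xel (w : Equiv.Perm (Fin n)) (i : Fin n) :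
    permAut w (Xel i : Laur R n) = Xel (w i) := by
  rw [Xel, permAut_mono, Finsupp.domCongr_apply, Finsupp.equivMapDomain_single, Xel]

/-- The endomorphism `X^a ↦ q^{κ a} X^a` attached to an additive function `κ` of the exponent
vector. -/
def scaleHom (q : Rˣ) (κ : (Fin n →₀ ℤ) →+ ℤ) : Laur R n →ₐ[R] Laur R n :=
  AddMonoidAlgebra.lift R _ _
    { toFun := fun a => mono a.toAdd ↑(q ^ κ a.toAdd)
      map_one' := by simp [mono_zero]
      map_mul' := fun a b => by simp [mono_mul_mono, zpow_add] }

lemma scaleHom_mono (q : Rˣ) (κ : (Fin n →₀ ℤ) →+ ℤ) (a : Fin n →₀ ℤ) (r : R) :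
    scaleHom q κ (mono a r) = mono a (↑(q ^ κ a) * r) := by
  rw [scaleHom, mono, AddMonoidAlgebra.lift_single]
  simp [smul_mono, mul_comm]

/-- The rescaling automorphism `X^a ↦ q^{κ a} X^a` attached to an additive function `κ` of the
exponent vector. -/
def scaleAut (q : Rˣ) (κ : (Fin n →₀ ℤ) →+ ℤ) : Laur R n ≃ₐ[R] Laur R n :=
  AlgEquiv.ofAlgHom (scaleHom q κ) (scaleHom q (-κ))
    (AlgHom.toLinearMap_injective <| linearMap_ext_mono fun a => by simp [scaleHom_mono])
    (AlgHom.toLinearMap_injective <| linearMap_ext_mono fun a => by simp [scaleHom_mono])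

lemma scaleAut_mono (q : Rˣ) (κ : (Fin n →₀ ℤ) →+ ℤ) (a : Fin n →₀ ℤ) :
    scaleAut q κ (mono a 1) = (↑(q ^ κ a) : R) • mono a 1 := by
  rw [smul_mono]
  exact scaleHom_mono ..

lemma scaleAut_add (q : Rˣ) (κ κ' : (Fin n →₀ ℤ) →+ ℤ) :
    scaleAut q (κ + κ') = scaleAut q κ * scaleAut q κ' :=
  algEquiv_ext_mono fun a => by
    simp [scaleAut_mono, zpow_add, smul_smul, mul_comm]

lemma scaleAut_zero (q : Rˣ) : scaleAut q (0 : (Fin n →₀ ℤ) →+ ℤ) = 1 :=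
  algEquiv_ext_mono fun a => by simp [scaleAut_mono]

lemma scaleAut_inv (q : Rˣ) (κ : (Fin n →₀ ℤ) →+ ℤ) : (scaleAut q κ)⁻¹ = scaleAut q (-κ) :=
  inv_eq_of_mul_eq_one_right (by rw [← scaleAut_add, add_neg_cancel, scaleAut_zero])

lemma scaleAut_zpow (q : Rˣ) (κ : (Fin n →₀ ℤ) →+ ℤ) (m : ℤ) :
    scaleAut q κ ^ m = scaleAut q (m • κ) := by
  induction m with
  | zero => rw [zpow_zero, zero_smul, scaleAut_zero]
  | succ m ih => rw [zpow_add_one, ih, add_smul, one_smul, scaleAut_add]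
  | pred m ih => rw [zpow_sub_one, ih, sub_smul, one_smul, sub_eq_add_neg, scaleAut_add,
      scaleAut_inv]

lemma scaleAut_mul_permAut (q : Rˣ) (κ : (Fin n →₀ ℤ) →+ ℤ) (w : Equiv.Perm (Fin n)) :
    scaleAut q κ * permAut w
      = permAut w * scaleAut q (κ.comp (Finsupp.domCongr w : _ ≃+ (Fin n →₀ ℤ)).toAddMonoidHom) :=
  algEquiv_ext_mono fun a => by
    rw [AlgEquiv.mul_apply, AlgEquiv.mul_apply, permAut_mono, scaleAut_mono, scaleAut_mono,
      map_smul, permAut_mono]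
    rfl

/-- The group of automorphisms `X^a ↦ q^{κ a} X^{w a}`; it is the semidirect product of the
permutations of the variables and the rescalings. -/
def monomialAutGroup (R : Type*) [CommRing R] (n : ℕ) (q : Rˣ) :
    Subgroup (Laur R n ≃ₐ[R] Laur R n) where
  carrier := {σ | ∃ w κ, σ = permAut w * scaleAut q κ}
  one_mem' := ⟨1, 0, by rw [map_one, scaleAut_zero, mul_one]⟩
  mul_mem' := by
    rintro _ _ ⟨v, κ, rfl⟩ ⟨w, κ', rfl⟩
    refine ⟨v * w, κ.comp (Finsupp.domCongr w : _ ≃+ (Fin n →₀ ℤ)).toAddMonoidHom + κ', ?_⟩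
    rw [map_mul, scaleAut_add, mul_assoc, ← mul_assoc (scaleAut q κ), scaleAut_mul_permAut]
    simp only [mul_assoc]
  inv_mem' := by
    rintro _ ⟨w, κ, rfl⟩
    exact ⟨w⁻¹, _, by rw [mul_inv_rev, scaleAut_inv, ← map_inv, scaleAut_mul_permAut]⟩

lemma permAut_mem_monomialAutGroup (q : Rˣ) (w : Equiv.Perm (Fin n)) :
    permAut w ∈ monomialAutGroup R n q :=
  ⟨w, 0, by rw [scaleAut_zero, mul_one]⟩

/-- The `q`-Euler automorphism `X^a ↦ q^{deg a} X^a`. -/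
def eulerAut (n : ℕ) (q : Rˣ) : Laur R n ≃ₐ[R] Laur R n :=
  scaleAut q Finsupp.degree

lemma eulerAut_mono (q : Rˣ) (a : Fin n →₀ ℤ) :
    eulerAut n q (mono a 1) = (↑(q ^ a.degree) : R) • mono a 1 :=
  scaleAut_mono ..

lemma eulerAut_zpow_mono (q : Rˣ) (m : ℤ) (a : Fin n →₀ ℤ) :
    (eulerAut n q ^ m) (mono a 1) = (↑(q ^ (m * a.degree)) : R) • mono a 1 := by
  rw [eulerAut, scaleAut_zpow, scaleAut_mono]
  rfl

lemma eulerAut_Xel (q : Rˣ) (i : Fin n) : eulerAut n q (Xel i : Laur R n) = (q : R) • Xel i := by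
  rw [Xel, eulerAut_mono, Finsupp.degree_single, zpow_one]

lemma degree_domCongr (w : Equiv.Perm (Fin n)) (a : Fin n →₀ ℤ) :
    (Finsupp.domCongr w a).degree = a.degree := by
  rw [Finsupp.degree_eq_sum, Finsupp.degree_eq_sum, Finsupp.domCongr_apply]
  exact Equiv.sum_comp w.symm a

lemma eulerAut_mul_permAut (q : Rˣ) (w : Equiv.Perm (Fin n)) :
    (eulerAut n q * permAut w : Laur R n ≃ₐ[R] Laur R n) = permAut w * eulerAut n q :=
  algEquiv_ext_mono fun a => by
    rw [AlgEquiv.mul_apply, AlgEquiv.mul_apply, permAut_mono, eulerAut_mono, eulerAut_mono,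
      map_smul, permAut_mono, degree_domCongr]

end MonomialAutomorphisms

section Rotation

variable [NeZero n]

/-- The automorphism `X^{(a_1, …, a_n)} ↦ q^{a_1} X^{(a_2, …, a_n, a_1)}`, that is `π⁻¹`. -/
def rotAut (n : ℕ) [NeZero n] (q : Rˣ) : Laur R n ≃ₐ[R] Laur R n :=
  permAut (finRotate n).symm * scaleAut q (Finsupp.applyAddHom 0)

lemma rotAut_mem_monomialAutGroup (q : Rˣ) : rotAut n q ∈ monomialAutGroup R n q :=
  ⟨_, _, rfl⟩

lemma rotAut_mono (q : Rˣ) (a : Fin n →₀ ℤ) :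
    rotAut n q (mono a 1) = (↑(q ^ a 0) : R) • mono (Finsupp.domCongr (finRotate n).symm a) 1 := by
  rw [rotAut, AlgEquiv.mul_apply, scaleAut_mono, map_smul, permAut_mono]
  rfl

lemma rotAut_Xel_of_ne_zero (q : Rˣ) {i : Fin n} (hi : i ≠ 0) :
    rotAut n q (Xel i : Laur R n) = Xel ((finRotate n).symm i) := by
  rw [Xel, rotAut_mono, Finsupp.single_eq_of_ne' hi, zpow_zero, Units.val_one, one_smul,
    Finsupp.domCongr_apply, Finsupp.equivMapDomain_single, Xel]

omit [NeZero n] in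
lemma finRotate_symm_mk_succ {j : ℕ} (hj : j + 1 < n) :
    (finRotate n).symm ⟨j + 1, hj⟩ = ⟨j, Nat.lt_of_succ_lt hj⟩ := by
  obtain ⟨m, rfl⟩ := Nat.exists_eq_add_of_lt hj
  exact (Equiv.symm_apply_eq _).2 (finRotate_of_lt (by omega)).symm

lemma finRotate_pow_apply (k : ℕ) (i : Fin n) : (finRotate n ^ k) i = i + Fin.ofNat n k := by
  induction k with
  | zero => simp
  | succ k ih =>
    have hk : Fin.ofNat n (k + 1) = Fin.ofNat n k + 1 := Fin.ext <| by simp [Fin.val_add]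
    rw [pow_succ', Equiv.Perm.mul_apply, ih, finRotate_apply, hk, add_assoc]

lemma finRotate_pow_self : finRotate n ^ n = 1 :=
  Equiv.ext fun i => by simp [finRotate_pow_apply]

lemma rotAut_pow_mono (q : Rˣ) (k : ℕ) (a : Fin n →₀ ℤ) :
    (rotAut n q ^ k) (mono a 1) = (↑(q ^ ∑ j ∈ Finset.range k, a (Fin.ofNat n j)) : R)
      • mono (Finsupp.domCongr (finRotate n ^ k)⁻¹ a) 1 := by
  induction k with
  | zero => simp [domCongr_one, -Finsupp.domCongr_apply]
  | succ k ih =>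
    have hfirst : Finsupp.domCongr (finRotate n ^ k)⁻¹ a 0 = a (Fin.ofNat n k) := by
      rw [Finsupp.domCongr_apply, Finsupp.equivMapDomain_apply]
      change a ((finRotate n ^ k) 0) = _
      rw [finRotate_pow_apply, zero_add]
    rw [pow_succ', AlgEquiv.mul_apply, ih, map_smul, rotAut_mono, hfirst, smul_smul,
      ← Units.val_mul, ← zpow_add, Finset.sum_range_succ, ← domCongr_mul, pow_succ, mul_inv_rev]
    rfl

theorem rotAut_pow (q : Rˣ) : rotAut n q ^ n = (eulerAut n q : Laur R n ≃ₐ[R] Laur R n) := by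
  refine algEquiv_ext_mono fun a => ?_
  have hsum : ∑ j ∈ Finset.range n, a (Fin.ofNat n j) = a.degree := by
    rw [Finset.sum_range, Finsupp.degree_eq_sum]
    simp
  rw [rotAut_pow_mono, eulerAut_mono, finRotate_pow_self, inv_one, domCongr_one, hsum]

lemma rotAut_mul_permAut (q : Rˣ) {w : Equiv.Perm (Fin n)} (hw : w 0 = 0) :
    (rotAut n q * permAut w : Laur R n ≃ₐ[R] Laur R n)
      = permAut ((finRotate n).symm * w * finRotate n) * rotAut n q := by
  refine algEquiv_ext_mono fun a => ?_
  have hfirst : Finsupp.domCongr w a 0 = a 0 := by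
    rw [Finsupp.domCongr_apply, Finsupp.equivMapDomain_apply, (Equiv.symm_apply_eq w).2 hw.symm]
  have hcancel : (finRotate n).symm * w * finRotate n * (finRotate n).symm
      = (finRotate n).symm * w := by
    rw [mul_assoc]
    exact congrArg _ (mul_inv_cancel (finRotate n))
  rw [AlgEquiv.mul_apply, AlgEquiv.mul_apply, permAut_mono, rotAut_mono, rotAut_mono, map_smul,
    permAut_mono, hfirst, ← domCongr_mul, ← domCongr_mul, hcancel]

end Rotation

section ToFrac

variable (F A : Type*) [CommRing F] [CommRing A] [Algebra F A]

/-- The inclusion of a commutative algebra in its ring of fractions. -/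
abbrev toFrac : A →ₐ[F] FractionRing A :=
  IsScalarTower.toAlgHom F A (FractionRing A)

lemma toFrac_injective : Function.Injective (toFrac F A) :=
  IsFractionRing.injective A (FractionRing A)

end ToFrac

section DemazureLusztigField

variable {F K : Type*} [Field F] [Field K] [Algebra F K]

/-- The Demazure–Lusztig operator of a field `K` attached to two elements `x`, `y` and an
automorphism `σ`, which is meant to exchange `x` and `y`. -/
def demazureLusztig (t : F) (x y : K) (σ : K ≃ₐ[F] K) (p : K) : K :=
  ((t⁻¹ • y - t • x) * σ p + (t - t⁻¹) • (y * p)) / (y - x)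

lemma demazureLusztig_comm (t : F) {x y z w : K} {σ ρ : K ≃ₐ[F] K} (hσρ : Commute σ ρ)
    (hz : σ z = z) (hw : σ w = w) (hx : ρ x = x) (hy : ρ y = y) (p : K) :
    demazureLusztig t x y σ (demazureLusztig t z w ρ p)
      = demazureLusztig t z w ρ (demazureLusztig t x y σ p) := by
  have hp : σ (ρ p) = ρ (σ p) := AlgEquiv.congr_fun hσρ p
  simp only [demazureLusztig, map_div₀, map_add, map_mul, map_sub, AlgEquiv.commutes, hz, hw,
    hx, hy, hp, Algebra.smul_def]
  ring

lemma demazureLusztig_braid (t : F) {x y z : K} (hxy : x ≠ y) (hxz : x ≠ z) (hyz : y ≠ z)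
    {σ ρ : K ≃ₐ[F] K} (hσ : σ * σ = 1) (hρ : ρ * ρ = 1) (hσρ : σ * ρ * σ = ρ * σ * ρ)
    (hσx : σ x = y) (hσz : σ z = z) (hρx : ρ x = x) (hρy : ρ y = z) (p : K) :
    demazureLusztig t x y σ (demazureLusztig t y z ρ (demazureLusztig t x y σ p))
      = demazureLusztig t y z ρ (demazureLusztig t x y σ (demazureLusztig t y z ρ p)) := by
  have hσσ (p : K) : σ (σ p) = p := AlgEquiv.congr_fun hσ p
  have hρρ (p : K) : ρ (ρ p) = p := AlgEquiv.congr_fun hρ p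
  have hbraid : σ (ρ (σ p)) = ρ (σ (ρ p)) := AlgEquiv.congr_fun hσρ p
  have hσy : σ y = x := by rw [← hσx, hσσ]
  have hρz : ρ z = y := by rw [← hρy, hρρ]
  have hyx' : y - x ≠ 0 := sub_ne_zero.2 hxy.symm
  have hzx' : z - x ≠ 0 := sub_ne_zero.2 hxz.symm
  have hzy' : z - y ≠ 0 := sub_ne_zero.2 hyz.symm
  simp only [demazureLusztig, map_div₀, map_add, map_mul, map_sub, AlgEquiv.commutes, hσx,
    hσy, hσz, hρx, hρy, hρz, hσσ, hρρ, hbraid, Algebra.smul_def]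
  generalize algebraMap F K t = s, algebraMap F K t⁻¹ = r
  rw [← neg_sub y x, ← neg_sub z y]
  field_simp
  ring

end DemazureLusztigField

section DemazureLusztig

variable {F : Type*} [Field F] {t : F} {i j k l : Fin n} {T T' : Module.End F (Laur F n)}

/-- An automorphism of the Laurent polynomial ring, as a linear operator. -/
abbrev autOp : (Laur F n ≃ₐ[F] Laur F n) →* Module.End F (Laur F n) :=
  AlgEquiv.toLinearMapHom F (Laur F n)

/-- An automorphism of the Laurent polynomial ring, as an invertible linear operator. -/
def autUnit : (Laur F n ≃ₐ[F] Laur F n) →* (Module.End F (Laur F n))ˣ :=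
  autOp.toHomUnits

/-- `T` is the Demazure–Lusztig operator of the variables `X_i` and `X_j`: this is
the defining formula with the denominator `X_j - X_i` cleared. -/
def IsDemazureLusztig (t : F) (i j : Fin n) (T : Module.End F (Laur F n)) : Prop :=
  ∀ p, (Xel j - Xel i) * T p
    = (t⁻¹ • Xel j - t • Xel i) * permAut (Equiv.swap i j) p + (t - t⁻¹) • (Xel j * p)

/-- The action of the symmetric group on rational functions. -/
def permFrac (F : Type*) [Field F] (n : ℕ) :
    Equiv.Perm (Fin n) →* (FractionRing (Laur F n) ≃ₐ[F] FractionRing (Laur F n)) :=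
  (IsFractionRing.fieldEquivOfAlgEquivHom F (FractionRing (Laur F n))).comp
    (permAut (R := F))

lemma permFrac_toFrac (w : Equiv.Perm (Fin n)) (p : Laur F n) :
    permFrac F n w (toFrac F (Laur F n) p) = toFrac F (Laur F n) (permAut w p) :=
  IsFractionRing.fieldEquivOfAlgEquiv_algebraMap ..

lemma permFrac_Xel (w : Equiv.Perm (Fin n)) (i : Fin n) :
    permFrac F n w (toFrac F (Laur F n) (Xel i)) = toFrac F (Laur F n) (Xel (w i)) := by
  rw [permFrac_toFrac, permAut_Xel]

lemma Xel_sub_Xel_ne_zero (hij : i ≠ j) : (Xel j - Xel i : Laur F n) ≠ 0 :=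
  sub_ne_zero.2 fun h => hij (Xel_injective h).symm

namespace IsDemazureLusztig

lemma commute_mulOp (hT : IsDemazureLusztig t i j T) (hij : i ≠ j) {g : Laur F n}
    (hg : permAut (Equiv.swap i j) g = g) : Commute T (mulOp g) := by
  refine LinearMap.ext fun p => mul_left_cancel₀ (Xel_sub_Xel_ne_zero hij) ?_
  rw [Module.End.mul_apply, Module.End.mul_apply, mulOp_apply, mulOp_apply, hT (g * p),
    mul_left_comm (Xel j - Xel i) g, hT p, map_mul, hg]
  simp only [Algebra.smul_def]
  ring

lemma semiconjBy_autOp (hT : IsDemazureLusztig t i j T) (hT' : IsDemazureLusztig t k l T')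
    (hkl : k ≠ l) {σ : Laur F n ≃ₐ[F] Laur F n} {u : F} (hu : u ≠ 0)
    (hi : σ (Xel i) = u • Xel k) (hj : σ (Xel j) = u • Xel l)
    (hσ : σ * permAut (Equiv.swap i j) = permAut (Equiv.swap k l) * σ) :
    SemiconjBy (autOp σ) T T' := by
  refine LinearMap.ext fun p => mul_left_cancel₀ (Xel_sub_Xel_ne_zero hkl) ?_
  have hswap : σ (permAut (Equiv.swap i j) p) = permAut (Equiv.swap k l) (σ p) :=
    AlgEquiv.congr_fun hσ p
  have hTp := congrArg σ (hT p)
  simp only [map_mul, map_sub, map_add, map_smul, hi, hj, hswap] at hTp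
  refine smul_right_injective _ hu ?_
  change u • ((Xel l - Xel k) * σ (T p)) = u • ((Xel l - Xel k) * T' (σ p))
  rw [hT', ← smul_mul_assoc, smul_sub, hTp]
  simp only [Algebra.smul_def]
  ring

lemma toFrac_apply (hT : IsDemazureLusztig t i j T) (hij : i ≠ j) (p : Laur F n) :
    toFrac F (Laur F n) (T p)
      = demazureLusztig t (toFrac F (Laur F n) (Xel i)) (toFrac F (Laur F n) (Xel j))
          (permFrac F n (Equiv.swap i j)) (toFrac F (Laur F n) p) := by
  have hne : toFrac F (Laur F n) (Xel j - Xel i : Laur F n) ≠ 0 :=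
    (map_ne_zero_iff _ (toFrac_injective F (Laur F n))).2 (Xel_sub_Xel_ne_zero hij)
  rw [demazureLusztig, permFrac_toFrac, ← map_sub, eq_div_iff hne, mul_comm, ← map_mul, hT p]
  simp only [map_add, map_mul, map_sub, map_smul]

lemma commute (hT : IsDemazureLusztig t i j T) (hT' : IsDemazureLusztig t k l T')
    (hijkl : [i, j, k, l].Nodup) : Commute T T' := by
  refine LinearMap.ext fun p => toFrac_injective F (Laur F n) ?_
  have hij : i ≠ j := by grind
  have hkl : k ≠ l := by grind
  have hcomm : Commute (permFrac F n (Equiv.swap i j)) (permFrac F n (Equiv.swap k l)) :=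
    (Equiv.Perm.disjoint_swap_swap hijkl).commute.map (permFrac F n)
  simp only [Module.End.mul_apply, hT.toFrac_apply hij, hT'.toFrac_apply hkl]
  apply demazureLusztig_comm t hcomm <;> rw [permFrac_Xel, Equiv.swap_apply_of_ne_of_ne] <;> grind

lemma braid (hT : IsDemazureLusztig t i j T) (hT' : IsDemazureLusztig t j k T')
    (hij : i ≠ j) (hik : i ≠ k) (hjk : j ≠ k) : T * T' * T = T' * T * T' := by
  refine LinearMap.ext fun p => toFrac_injective F (Laur F n) ?_
  have hX {a b : Fin n} (hab : a ≠ b) :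
      toFrac F (Laur F n) (Xel a) ≠ toFrac F (Laur F n) (Xel b) :=
    fun h => hab (Xel_injective (toFrac_injective F (Laur F n) h))
  have hswap : Equiv.swap i j * Equiv.swap j k * Equiv.swap i j
      = Equiv.swap j k * Equiv.swap i j * Equiv.swap j k := by
    rw [Equiv.swap_mul_swap_mul_swap hij hik, Equiv.swap_comm i j, Equiv.swap_comm j k,
      Equiv.swap_mul_swap_mul_swap hjk.symm hik.symm, Equiv.swap_comm]
  simp only [Module.End.mul_apply, hT.toFrac_apply hij, hT'.toFrac_apply hjk]
  apply demazureLusztig_braid t (hX hij) (hX hik) (hX hjk)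
  · rw [← map_mul, Equiv.swap_mul_self, map_one]
  · rw [← map_mul, Equiv.swap_mul_self, map_one]
  · simp only [← map_mul, hswap]
  · rw [permFrac_Xel, Equiv.swap_apply_left]
  · rw [permFrac_Xel, Equiv.swap_apply_of_ne_of_ne hik.symm hjk.symm]
  · rw [permFrac_Xel, Equiv.swap_apply_of_ne_of_ne hij hik]
  · rw [permFrac_Xel, Equiv.swap_apply_left]

end IsDemazureLusztig

end DemazureLusztig

section QCommutation

variable {F A : Type*} [Field F] [Ring A] [Algebra F A] {u : Aˣ} {q : Fˣ} {c d : ℤ} {x y : A}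

/-- The elements `x` with `u x = q^d x u`, that is, those of degree `d` for the grading whose
degree operator is conjugation by `u`. -/
def qCommutant (u : Aˣ) (q : Fˣ) (d : ℤ) : Submodule F A :=
  Module.End.eigenspace (LinearMap.mulLeft F (u : A) * LinearMap.mulRight F (↑u⁻¹ : A)) ↑(q ^ d)

lemma mem_qCommutant : x ∈ qCommutant u q d ↔ ↑u * x = (↑(q ^ d) : F) • (x * ↑u) := by
  rw [qCommutant, Module.End.mem_eigenspace_iff, Module.End.mul_apply, LinearMap.mulLeft_apply,
    LinearMap.mulRight_apply, ← mul_assoc, Units.mul_inv_eq_iff_eq_mul, smul_mul_assoc]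

lemma mem_qCommutant_zero : x ∈ qCommutant u q 0 ↔ Commute (u : A) x := by
  rw [mem_qCommutant, zpow_zero, Units.val_one, one_smul]
  rfl

lemma mul_mem_qCommutant (hx : x ∈ qCommutant u q c) (hy : y ∈ qCommutant u q d) :
    x * y ∈ qCommutant u q (c + d) := by
  rw [mem_qCommutant] at *
  rw [← mul_assoc, hx, smul_mul_assoc, mul_assoc, hy, mul_smul_comm, smul_smul, zpow_add,
    Units.val_mul, mul_assoc x]

lemma mem_qCommutant_neg_of_mul_eq_one (hx : x ∈ qCommutant u q d) (hxy : x * y = 1)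
    (hyx : y * x = 1) : y ∈ qCommutant u q (-d) := by
  rw [mem_qCommutant] at *
  calc ↑u * y = y * x * ↑u * y := by rw [hyx, one_mul]
    _ = (↑(q ^ (-d)) : F) • (y * (↑(q ^ d) : F) • (x * ↑u)) * y := by
      rw [mul_smul_comm, smul_smul, ← Units.val_mul, ← zpow_add, neg_add_cancel, zpow_zero,
        Units.val_one, one_smul, mul_assoc y]
    _ = (↑(q ^ (-d)) : F) • (y * ↑u) := by
      rw [← hx, smul_mul_assoc, mul_assoc y, mul_assoc (u : A), hxy, mul_one]

lemma iSupIndep_qCommutant (hq : Function.Injective fun d : ℤ => q ^ d) :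
    iSupIndep (qCommutant (A := A) u q) :=
  (Module.End.eigenspaces_iSupIndep
    (LinearMap.mulLeft F (u : A) * LinearMap.mulRight F (↑u⁻¹ : A))).comp
    (Units.val_injective.comp hq)

lemma mul_mem_iSup_qCommutant {S : Set ℤ} (hx : x ∈ ⨆ c ∈ S, qCommutant u q c)
    (hy : y ∈ qCommutant u q d) : x * y ∈ ⨆ c ∈ (· + d) '' S, qCommutant u q c := by
  have hle : ⨆ c ∈ S, qCommutant u q c
      ≤ (⨆ c ∈ (· + d) '' S, qCommutant u q c).comap (LinearMap.mulRight F y) :=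
    iSup₂_le fun c hc z hz =>
      le_biSup (qCommutant u q) (Set.mem_image_of_mem _ hc) (mul_mem_qCommutant hz hy)
  exact hle hx

variable (u q) in
/-- The subalgebra of sums of elements which commute with `u` up to powers of `q`. -/
def qGradedSubalgebra : Subalgebra F A :=
  (⨆ d, qCommutant u q d).toSubalgebra
    (Submodule.mem_iSup_of_mem 0 (mem_qCommutant_zero.2 (Commute.one_right _)))
    (fun x y hx hy => by
      have hmul : (⨆ c, qCommutant u q c) * (⨆ d, qCommutant u q d) ≤ ⨆ d, qCommutant u q d := by
        simp only [Submodule.iSup_mul, Submodule.mul_iSup]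
        exact iSup₂_le fun c d => Submodule.mul_le.2 fun x hx y hy =>
          Submodule.mem_iSup_of_mem _ (mul_mem_qCommutant hx hy)
      exact hmul (Submodule.mul_mem_mul hx hy))

lemma qCommutant_le_qGradedSubalgebra (hx : x ∈ qCommutant u q d) : x ∈ qGradedSubalgebra u q :=
  Submodule.mem_iSup_of_mem d hx

open scoped Pointwise in
/-- Multiplication by `y` shifts degrees, so a fixed point has components in arbitrarily large
degrees unless it vanishes. -/
theorem eq_zero_of_mul_eq_self (hq : Function.Injective fun d : ℤ => q ^ d)
    (hx : x ∈ qGradedSubalgebra u q) (hy : y ∈ qCommutant u q d) (hd : d ≠ 0)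
    (hxy : x * y = x) : x = 0 := by
  obtain ⟨S, hS⟩ := (Submodule.mem_iSup_iff_exists_finset ..).1 hx
  have hshift (k : ℕ) : x ∈ ⨆ c ∈ (· + k * d) '' (S : Set ℤ), qCommutant u q c := by
    induction k with
    | zero => simpa using hS
    | succ k ih =>
      have hmem := mul_mem_iSup_qCommutant ih hy
      rw [hxy, Set.image_image] at hmem
      simpa only [Nat.cast_succ, add_mul, one_mul, add_assoc] using hmem
  have hinj : Function.Injective fun k : ℕ => (k : ℤ) * d :=
    (mul_left_injective₀ hd).comp Nat.cast_injective
  obtain ⟨_, ⟨k, rfl⟩, hk⟩ := (Set.infinite_range_of_injective hinj).exists_notMem_finset (S - S)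
  have hdisj : Disjoint (S : Set ℤ) ((· + k * d) '' S) := by
    rw [Set.disjoint_left]
    rintro _ hb ⟨a, ha, rfl⟩
    exact hk (Finset.mem_sub.2 ⟨_, hb, a, ha, add_sub_cancel_left ..⟩)
  exact Submodule.disjoint_def.1 ((iSupIndep_qCommutant hq).disjoint_biSup_biSup hdisj) x hS
    (hshift k)

theorem commute_of_commute_mul_sub {yi : A} (hq : Function.Injective fun d : ℤ => q ^ d)
    (hx : x ∈ qGradedSubalgebra u q) {m : A} (hm : m ∈ qGradedSubalgebra u q)
    (hy : y ∈ qCommutant u q d) (hd : d ≠ 0) (hyi : y * yi = 1) (hyi' : yi * y = 1)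
    (hxy : Commute x y) (hxm : Commute x (m * (y - yi))) : Commute x m := by
  have hxyi : Commute x (y - yi) :=
    hxy.sub_right (Commute.units_inv_right (u := ⟨y, yi, hyi, hyi'⟩) hxy)
  have hzero : (x * m - m * x) * (y - yi) = 0 := by
    rw [sub_mul, mul_assoc, hxm.eq, mul_assoc m x, hxyi.eq, mul_assoc m, sub_self]
  have hfix : (x * m - m * x) * (y * y) = x * m - m * x := by
    rw [mul_sub, sub_eq_zero] at hzero
    rw [← mul_assoc, hzero, mul_assoc, hyi', mul_one]
  exact sub_eq_zero.1 (eq_zero_of_mul_eq_self hq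
    (sub_mem (mul_mem hx hm) (mul_mem hm hx)) (mul_mem_qCommutant hy hy) (by omega) hfix)

end QCommutation

section SkewSpan

variable {F A : Type*} [CommRing F] [CommRing A] [Algebra F A]
  {G : Subgroup (A ≃ₐ[F] A)} {f : Module.End F A} {x : A}

/-- The linear maps from `A` to its field of fractions of the form `∑ g_σ σ`, with `σ` in `G` and
rational coefficients `g_σ` on the left. -/
def skewSpan (G : Subgroup (A ≃ₐ[F] A)) : Submodule (FractionRing A) (A →ₗ[F] FractionRing A) :=
  Submodule.span _ ((fun σ : A ≃ₐ[F] A => (toFrac F A).toLinearMap ∘ₗ σ.toLinearMap) '' G)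

lemma toFrac_comp_mem_skewSpan {σ : A ≃ₐ[F] A} (hσ : σ ∈ G) :
    (toFrac F A).toLinearMap ∘ₗ σ.toLinearMap ∈ skewSpan G :=
  Submodule.subset_span ⟨σ, hσ, rfl⟩

/-- The operators by which `skewSpan G` is stable under composition on the right; they are the
operators on `A` lying in the skew group algebra of `G` over the field of fractions. -/
def skewStabilizer (G : Subgroup (A ≃ₐ[F] A)) : Subalgebra F (Module.End F A) where
  carrier := {f | ∀ φ ∈ skewSpan G, φ ∘ₗ f ∈ skewSpan G}
  mul_mem' hf hg φ hφ := hg _ (hf φ hφ)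
  add_mem' {f g} hf hg φ hφ := by
    rw [LinearMap.comp_add]
    exact add_mem (hf φ hφ) (hg φ hφ)
  algebraMap_mem' c φ hφ := by
    have hc : φ ∘ₗ algebraMap F (Module.End F A) c = c • φ :=
      LinearMap.ext fun p => map_smul φ c p
    rw [hc]
    exact Submodule.smul_of_tower_mem _ c hφ

lemma mem_skewStabilizer_of_generators
    (hf : ∀ σ ∈ G, (toFrac F A).toLinearMap ∘ₗ σ.toLinearMap ∘ₗ f ∈ skewSpan G) :
    f ∈ skewStabilizer G := by
  intro φ hφ
  induction hφ using Submodule.span_induction with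
  | mem φ hφ =>
    obtain ⟨σ, hσ, rfl⟩ := hφ
    exact hf σ hσ
  | zero => exact zero_mem _
  | add φ ψ _ _ hφ hψ => exact add_mem hφ hψ
  | smul c φ _ hφ => exact Submodule.smul_mem _ c hφ

lemma toLinearMap_mem_skewStabilizer {ρ : A ≃ₐ[F] A} (hρ : ρ ∈ G) :
    ρ.toLinearMap ∈ skewStabilizer G :=
  mem_skewStabilizer_of_generators fun _ hσ => toFrac_comp_mem_skewSpan (mul_mem hσ hρ)

lemma mulLeft_mem_skewStabilizer (x : A) : LinearMap.mulLeft F x ∈ skewStabilizer G := by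
  refine mem_skewStabilizer_of_generators fun σ hσ => ?_
  have hx : (toFrac F A).toLinearMap ∘ₗ σ.toLinearMap ∘ₗ LinearMap.mulLeft F x
      = toFrac F A (σ x) • ((toFrac F A).toLinearMap ∘ₗ σ.toLinearMap) :=
    LinearMap.ext fun p => by
      simp only [LinearMap.comp_apply, LinearMap.mulLeft_apply, AlgEquiv.toLinearMap_apply,
        AlgHom.toLinearMap_apply, map_mul, LinearMap.smul_apply, smul_eq_mul]
  rw [hx]
  exact Submodule.smul_mem _ _ (toFrac_comp_mem_skewSpan hσ)

lemma exists_skew_expansion (hf : f ∈ skewStabilizer G) :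
    ∃ g : (A ≃ₐ[F] A) →₀ FractionRing A, (∀ σ ∈ g.support, σ ∈ G) ∧
      ∀ p, toFrac F A (f p) = ∑ σ ∈ g.support, g σ * toFrac F A (σ p) := by
  have hmem : (toFrac F A).toLinearMap ∘ₗ f ∈ skewSpan G :=
    hf _ (toFrac_comp_mem_skewSpan (one_mem G))
  obtain ⟨g, hgG, hg⟩ := (Finsupp.mem_span_image_iff_linearCombination _).1 hmem
  refine ⟨g, fun σ hσ => hgG hσ, fun p => ?_⟩
  have hp := LinearMap.congr_fun hg p
  rw [Finsupp.linearCombination_apply, Finsupp.sum, LinearMap.sum_apply] at hp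
  exact hp.symm

variable [IsDomain A]

lemma mem_skewStabilizer_of_mul_eq {ρ : A ≃ₐ[F] A} (hρ : ρ ∈ G) {d y : A} (hd : d ≠ 0)
    (hf : ∀ p, d * f p = x * ρ p + y * p) : f ∈ skewStabilizer G := by
  refine mem_skewStabilizer_of_generators fun σ hσ => ?_
  have hσd : toFrac F A (σ d) ≠ 0 :=
    (map_ne_zero_iff _ (toFrac_injective F A)).2 ((map_ne_zero_iff _ σ.injective).2 hd)
  have hσf : (toFrac F A).toLinearMap ∘ₗ σ.toLinearMap ∘ₗ f
      = (toFrac F A (σ x) / toFrac F A (σ d))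
          • ((toFrac F A).toLinearMap ∘ₗ (σ * ρ).toLinearMap)
        + (toFrac F A (σ y) / toFrac F A (σ d))
          • ((toFrac F A).toLinearMap ∘ₗ σ.toLinearMap) := by
    refine LinearMap.ext fun p => mul_left_cancel₀ hσd ?_
    have hp := congrArg (toFrac F A ∘ σ) (hf p)
    simp only [Function.comp_apply, map_mul, map_add] at hp
    simp only [LinearMap.comp_apply, LinearMap.add_apply, LinearMap.smul_apply, smul_eq_mul,
      AlgHom.toLinearMap_apply, AlgEquiv.toLinearMap_apply, AlgEquiv.mul_apply]
    rw [hp]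
    field_simp
  rw [hσf]
  exact add_mem (Submodule.smul_mem _ _ (toFrac_comp_mem_skewSpan (mul_mem hσ hρ)))
    (Submodule.smul_mem _ _ (toFrac_comp_mem_skewSpan hσ))

lemma linearIndependent_toFrac_comp :
    LinearIndependent (FractionRing A) fun (σ : A ≃ₐ[F] A) (p : A) => toFrac F A (σ p) :=
  (linearIndependent_monoidHom A (FractionRing A)).comp
    (fun σ : A ≃ₐ[F] A => ((toFrac F A).comp σ.toAlgHom : A →* FractionRing A))
    fun _ _ h => AlgEquiv.ext fun p => toFrac_injective F A (DFunLike.congr_fun h p)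

/-- Compare the coefficients of `f x` and `x f`. -/
lemma apply_eq_of_skew_expansion {g : (A ≃ₐ[F] A) →₀ FractionRing A}
    (hg : ∀ p, toFrac F A (f p) = ∑ σ ∈ g.support, g σ * toFrac F A (σ p))
    (hx : Commute f (LinearMap.mulLeft F x)) {σ : A ≃ₐ[F] A} (hσ : σ ∈ g.support) : σ x = x := by
  have heq : ∑ σ ∈ g.support, (g σ * toFrac F A (σ x)) • (fun p => toFrac F A (σ p))
      = ∑ σ ∈ g.support, (g σ * toFrac F A x) • (fun p => toFrac F A (σ p)) := by
    funext p
    have hxp : f (x * p) = x * f p := LinearMap.congr_fun hx p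
    have hp := congrArg (toFrac F A) hxp
    rw [hg (x * p), map_mul (toFrac F A) x (f p), hg p, Finset.mul_sum] at hp
    rw [Finset.sum_apply, Finset.sum_apply]
    convert hp using 2 with σ _ σ _
    · rw [Pi.smul_apply, smul_eq_mul, map_mul σ x p, map_mul (toFrac F A) (σ x) (σ p), mul_assoc]
    · rw [Pi.smul_apply, smul_eq_mul, mul_left_comm, mul_assoc]
  have hcoeff := linearIndependent_iff'ₛ.1 linearIndependent_toFrac_comp _ _ _ heq σ hσ
  exact toFrac_injective F A (mul_left_cancel₀ (Finsupp.mem_support_iff.1 hσ) hcoeff)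

lemma apply_eq_sum_smul_of_skew_expansion {g : (A ≃ₐ[F] A) →₀ FractionRing A}
    (hg : ∀ p, toFrac F A (f p) = ∑ σ ∈ g.support, g σ * toFrac F A (σ p))
    {ret : FractionRing A →ₗ[F] F} (hret : ret 1 = 1) {c : (A ≃ₐ[F] A) → F} {r : F}
    (hx : x ≠ 0) (hfx : f x = r • x) (hσx : ∀ σ ∈ g.support, σ x = c σ • x) :
    f x = ∑ σ ∈ g.support, ret (g σ) • σ x := by
  have hfrac : r • (1 : FractionRing A) = ∑ σ ∈ g.support, c σ • g σ := by
    refine mul_right_cancel₀ ((map_ne_zero_iff _ (toFrac_injective F A)).2 hx) ?_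
    have hgx := hg x
    rw [hfx, map_smul] at hgx
    rw [smul_one_mul, hgx, Finset.sum_mul]
    refine Finset.sum_congr rfl fun σ hσ => ?_
    rw [hσx σ hσ, map_smul, mul_smul_comm, smul_mul_assoc]
  have hr : r = ∑ σ ∈ g.support, c σ * ret (g σ) := by
    simpa [hret] using congrArg ret hfrac
  rw [hfx, hr, Finset.sum_smul]
  refine Finset.sum_congr rfl fun σ hσ => ?_
  rw [hσx σ hσ, smul_smul, mul_comm]

end SkewSpan

section Rigidity

variable [Nontrivial R] {q : Rˣ}

lemma eq_and_eq_one_of_smul_mono_eq {a b : Fin n →₀ ℤ} {r : R}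
    (h : r • mono a 1 = (mono b 1 : Laur R n)) : a = b ∧ r = 1 := by
  rw [← mono_eq_smul] at h
  rcases (Finsupp.single_eq_single_iff ..).1 (congrArg AddMonoidAlgebra.coeff h) with h | h
  · exact h
  · exact absurd h.2 one_ne_zero

/-- The vectors `n a - deg a (1, …, 1)` and `a - deg a e₁` have degree zero: the former shows that
the permutation part is trivial, the latter that the rescaling depends on the degree only. -/
theorem eq_eulerAut_zpow_of_fixes_degree_zero [NeZero n]
    (hq : Function.Injective fun d : ℤ => q ^ d) {σ : Laur R n ≃ₐ[R] Laur R n}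
    (hσ : σ ∈ monomialAutGroup R n q)
    (hfix : ∀ a : Fin n →₀ ℤ, a.degree = 0 → σ (mono a 1) = mono a 1) :
    ∃ m : ℤ, σ = eulerAut n q ^ m := by
  obtain ⟨w, κ, rfl⟩ := hσ
  have hzero {a : Fin n →₀ ℤ} (ha : a.degree = 0) : Finsupp.domCongr w a = a ∧ κ a = 0 := by
    have h := hfix a ha
    rw [AlgEquiv.mul_apply, scaleAut_mono, map_smul, permAut_mono] at h
    obtain ⟨hw, hκ⟩ := eq_and_eq_one_of_smul_mono_eq h
    exact ⟨hw, hq (by simpa using hκ)⟩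
  have hperm (a : Fin n →₀ ℤ) : Finsupp.domCongr w a = a := by
    let ones : Fin n →₀ ℤ := Finsupp.equivFunOnFinite.symm 1
    have hdeg : ((n : ℤ) • a - a.degree • ones).degree = 0 := by
      simp [Finsupp.degree_eq_sum, ones, Finset.mul_sum, mul_comm]
    have h := (hzero hdeg).1
    rw [map_sub, map_zsmul, map_zsmul, domCongr_ones, sub_left_inj] at h
    exact smul_right_injective _ (Nat.cast_ne_zero.2 (NeZero.ne n)) h
  have hscale (a : Fin n →₀ ℤ) : κ a = κ (Finsupp.single 0 1) * a.degree := by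
    have hdeg : (a - a.degree • Finsupp.single 0 1).degree = 0 := by
      simp [Finsupp.degree_eq_sum]
    have h := (hzero hdeg).2
    rwa [map_sub, map_zsmul, sub_eq_zero, smul_eq_mul, mul_comm] at h
  refine ⟨κ (Finsupp.single 0 1), algEquiv_ext_mono fun a => ?_⟩
  rw [AlgEquiv.mul_apply, scaleAut_mono, map_smul, permAut_mono, hperm, hscale,
    eulerAut_zpow_mono]

end Rigidity

section SimultaneousEigenvectors

variable {q : Rˣ} {p : Laur R n} {a : Fin n →₀ ℤ}

lemma coeff_scaleAut (q : Rˣ) (κ : (Fin n →₀ ℤ) →+ ℤ) (p : Laur R n) (b : Fin n →₀ ℤ) :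
    (scaleAut q κ p).coeff b = ↑(q ^ κ b) * p.coeff b := by
  induction p using AddMonoidAlgebra.induction_linear with
  | zero => simp
  | add p p' hp hp' => rw [map_add, AddMonoidAlgebra.coeff_add, AddMonoidAlgebra.coeff_add,
      Finsupp.add_apply, Finsupp.add_apply, hp, hp', mul_add]
  | single a r =>
    change (scaleHom q κ (mono a r)).coeff b = _
    rw [scaleHom_mono]
    by_cases hab : a = b <;> simp [mono, hab]

lemma exists_eq_smul_mono_of_scaleAut [IsDomain R] (hq : Function.Injective fun d : ℤ => q ^ d)
    (hp : ∀ i, scaleAut q (Finsupp.applyAddHom i) p = (↑(q ^ a i) : R) • p) :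
    ∃ r : R, p = r • mono a 1 := by
  refine ⟨p.coeff a, AddMonoidAlgebra.ext (Finsupp.ext fun b => ?_)⟩
  rw [← mono_eq_smul, mono, AddMonoidAlgebra.coeff_single]
  by_cases hab : a = b
  · rw [hab, Finsupp.single_eq_same]
  · obtain ⟨i, hi⟩ := DFunLike.ne_iff.1 hab
    have hcoeff := congrArg (fun p : Laur R n => p.coeff b) (hp i)
    simp only [coeff_scaleAut, AddMonoidAlgebra.coeff_smul, Finsupp.smul_apply,
      smul_eq_mul] at hcoeff
    rw [Finsupp.single_eq_of_ne' hab]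
    by_contra hb
    exact hi (hq (Units.val_injective (mul_right_cancel₀ hb hcoeff))).symm

end SimultaneousEigenvectors

section PolynomialRep

lemma zpowOp_map {G M : Type*} [Group G] [Monoid M] (φ : G →* M) (g : G) (m : ℤ) :
    zpowOp (φ g) (φ g⁻¹) m = φ (g ^ m) := by
  unfold zpowOp
  split_ifs with hm
  · rw [← map_pow, ← zpow_natCast, Int.toNat_of_nonneg hm]
  · rw [← map_pow, ← zpow_natCast, Int.toNat_of_nonneg (by omega), inv_zpow', neg_neg]

/-- The operators of the polynomial representation of the double affine Hecke algebra of type `GL_n`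
from which `ℍ^{gl_n}` is built: the Demazure–Lusztig operators `T` with inverses `Ti`, the
Cherednik operators `Y` with inverses `Yi`, the `q`-analogues `D` of the Dunkl operators, and
`e i j = X_i D_j`. Indices are `0`-based; only the values of `T` at `k + 1 < n` and of the others
at `i < n` matter. -/
structure PolynomialRep {F : Type*} [Field F] (n : ℕ) [NeZero n] (q : Fˣ) (t : F) where
  T : ℕ → Module.End F (Laur F n)
  Ti : ℕ → Module.End F (Laur F n)
  Y : ℕ → Module.End F (Laur F n)
  Yi : ℕ → Module.End F (Laur F n)
  D : ℕ → Module.End F (Laur F n)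
  e : ℕ → ℕ → Module.End F (Laur F n)
  isDemazureLusztig : ∀ (k : ℕ) (hk : k + 1 < n),
    IsDemazureLusztig t ⟨k, Nat.lt_of_succ_lt hk⟩ ⟨k + 1, hk⟩ (T k)
  Ti_eq : ∀ k, Ti k = T k + (t⁻¹ - t) • (1 : Module.End F (Laur F n))
  T_inv : ∀ k, k + 1 < n → T k * Ti k = 1 ∧ Ti k * T k = 1
  Y_eq : ∀ i, Y i = cherednikElement n T Ti (autOp (rotAut n q)) i
  Y_inv : ∀ i, i < n → Y i * Yi i = 1 ∧ Yi i * Y i = 1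
  D_eq : ∀ i, D i = aF T i (n - 1 - i)
    * (((q : F) - (q : F)⁻¹)⁻¹ • (XinvOp (n - 1) * (Y (n - 1) - Yi (n - 1)))) * dF T i (n - 1 - i)
  e_eq : ∀ i j, e i j = XOp i * D j

namespace PolynomialRep

variable {F : Type*} [Field F] [NeZero n] {q : Fˣ} {t : F} (P : PolynomialRep n q t)

/-- The algebra `ℍ^{gl_n}`. -/
def glAlgebra : Subalgebra F (Module.End F (Laur F n)) :=
  Algebra.adjoin F (HglSet P.T P.Y P.Yi P.e)

section Membership

lemma T_mem_glAlgebra {k : ℕ} (hk : k + 1 < n) : P.T k ∈ P.glAlgebra :=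
  Algebra.subset_adjoin (Or.inl ⟨k, hk, rfl⟩)

lemma Y_mem_glAlgebra {i : ℕ} (hi : i < n) : P.Y i ∈ P.glAlgebra :=
  Algebra.subset_adjoin (Or.inr (Or.inl ⟨i, hi, rfl⟩))

lemma e_mem_glAlgebra {i j : ℕ} (hi : i < n) (hj : j < n) (hij : i ≠ j) :
    P.e i j ∈ P.glAlgebra :=
  Algebra.subset_adjoin (Or.inr (Or.inr (Or.inr ⟨i, j, hi, hj, hij, rfl⟩)))

variable {S : Subalgebra F (Module.End F (Laur F n))}

lemma Ti_mem {k : ℕ} (hT : P.T k ∈ S) : P.Ti k ∈ S := by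
  rw [P.Ti_eq]
  exact add_mem hT (S.smul_mem (one_mem S) _)

lemma Yi_eq {i : ℕ} (hi : i < n) :
    P.Yi i = dF P.T 0 i * autOp (rotAut n q)⁻¹ * dF P.Ti i (n - 1 - i) := by
  refine left_inv_eq_right_inv (P.Y_inv i hi).2 ?_
  have hrot : (autOp (rotAut n q) * autOp (rotAut n q)⁻¹ : Module.End F (Laur F n)) = 1 := by
    rw [← map_mul, mul_inv_cancel, map_one]
  have hleft : aF P.T i (n - 1 - i) * dF P.Ti i (n - 1 - i) = 1 :=
    aF_mul_dF_eq_one fun k hk => (P.T_inv _ (by omega)).1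
  have hright : aF P.Ti 0 i * dF P.T 0 i = 1 :=
    aF_mul_dF_eq_one fun k hk => (P.T_inv _ (by omega)).2
  rw [P.Y_eq, cherednikElement]
  calc _ = aF P.T i (n - 1 - i) * (autOp (rotAut n q) * (aF P.Ti 0 i * dF P.T 0 i) *
        autOp (rotAut n q)⁻¹) * dF P.Ti i (n - 1 - i) := by simp only [mul_assoc]
    _ = 1 := by rw [hright, mul_one, hrot, mul_one, hleft]

lemma rotAut_mem_glAlgebra : autOp (rotAut n q) ∈ P.glAlgebra := by
  have hrot : autOp (rotAut n q) = dF P.Ti 0 (n - 1) * P.Y 0 := by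
    rw [P.Y_eq, cherednikElement, aF_zero, mul_one, Nat.sub_zero, ← mul_assoc,
      dF_mul_aF_eq_one fun k hk => (P.T_inv _ (by omega)).2, one_mul]
  rw [hrot]
  exact mul_mem (dF_mem fun k hk => P.Ti_mem (P.T_mem_glAlgebra (by omega)))
    (P.Y_mem_glAlgebra (NeZero.pos n))

lemma Y_mem (hT : ∀ k, k + 1 < n → P.T k ∈ S) (hrot : autOp (rotAut n q) ∈ S) {i : ℕ}
    (hi : i < n) : P.Y i ∈ S := by
  rw [P.Y_eq]
  exact mul_mem (mul_mem (aF_mem fun k hk => hT _ (by omega)) hrot)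
    (aF_mem fun k hk => P.Ti_mem (hT _ (by omega)))

lemma Yi_mem (hT : ∀ k, k + 1 < n → P.T k ∈ S) (hrot : autOp (rotAut n q)⁻¹ ∈ S) {i : ℕ}
    (hi : i < n) : P.Yi i ∈ S := by
  rw [P.Yi_eq hi]
  exact mul_mem (mul_mem (dF_mem fun k hk => hT _ (by omega)) hrot)
    (dF_mem fun k hk => P.Ti_mem (hT _ (by omega)))

theorem glAlgebra_le (hT : ∀ k, k + 1 < n → P.T k ∈ S) (hX : ∀ x, mulOp x ∈ S)
    (hrot : autOp (rotAut n q) ∈ S) (hrot_inv : autOp (rotAut n q)⁻¹ ∈ S) : P.glAlgebra ≤ S := by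
  have hXOp (i : ℕ) : XOp i ∈ S := by
    unfold XOp
    split_ifs
    exacts [hX _, one_mem S]
  have hXinvOp (i : ℕ) : XinvOp i ∈ S := by
    unfold XinvOp
    split_ifs
    exacts [hX _, one_mem S]
  have hn : n - 1 < n := Nat.sub_one_lt (NeZero.ne n)
  refine Algebra.adjoin_le ?_
  rintro _ (⟨k, hk, rfl⟩ | ⟨i, hi, rfl⟩ | ⟨i, hi, rfl⟩ | ⟨i, j, -, -, -, rfl⟩)
  · exact hT k hk
  · exact P.Y_mem hT hrot hi
  · exact P.Yi_mem hT hrot_inv hi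
  · rw [P.e_eq, P.D_eq]
    exact mul_mem (hXOp i) (mul_mem (mul_mem (aF_mem fun k hk => hT _ (by omega))
      (S.smul_mem (mul_mem (hXinvOp _)
        (sub_mem (P.Y_mem hT hrot hn) (P.Yi_mem hT hrot_inv hn))) _))
      (dF_mem fun k hk => hT _ (by omega)))

end Membership

end PolynomialRep

end PolynomialRep

namespace PolynomialRep

variable {F : Type*} [Field F] [NeZero n] {q : Fˣ} {t : F} (P : PolynomialRep n q t)

section CentralElement

lemma semiconjBy_rotAut_T {k : ℕ} (hk : k + 2 < n) :
    SemiconjBy (autOp (rotAut n q)) (P.T (k + 1)) (P.T k) := by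
  have hne (j : ℕ) (hj : j + 1 < n) : (⟨j + 1, hj⟩ : Fin n) ≠ 0 := by
    simp [Fin.ext_iff]
  refine (P.isDemazureLusztig (k + 1) hk).semiconjBy_autOp
    (P.isDemazureLusztig k (Nat.lt_of_succ_lt hk)) (by simp) one_ne_zero ?_ ?_ ?_
  · rw [rotAut_Xel_of_ne_zero q (hne _ _), finRotate_symm_mk_succ, one_smul]
  · rw [rotAut_Xel_of_ne_zero q (hne _ _), finRotate_symm_mk_succ, one_smul]
  · have hcancel : (finRotate n).symm * finRotate n = 1 := inv_mul_cancel (finRotate n)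
    rw [rotAut_mul_permAut q (Equiv.swap_apply_of_ne_of_ne (hne _ _).symm (hne _ _).symm),
      Equiv.mul_swap_eq_swap_mul, finRotate_symm_mk_succ, finRotate_symm_mk_succ, mul_assoc,
      hcancel, mul_one]

lemma commute_eulerAut_T {k : ℕ} (hk : k + 1 < n) :
    Commute (autOp (eulerAut n q)) (P.T k) :=
  (P.isDemazureLusztig k hk).semiconjBy_autOp (P.isDemazureLusztig k hk) (by simp) q.ne_zero
    (eulerAut_Xel q _) (eulerAut_Xel q _) (eulerAut_mul_permAut q _)

lemma autUnit_rotAut_pow :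
    (autUnit (rotAut n q) : Module.End F (Laur F n)) ^ n = autOp (eulerAut n q) := by
  rw [← rotAut_pow, map_pow]
  rfl

theorem affineBraidRelations : AffineBraidRelations n P.T (autUnit (rotAut n q)) where
  commute i j hij hj := (P.isDemazureLusztig i (by omega)).commute (P.isDemazureLusztig j hj)
    (by simp [Fin.ext_iff]; omega)
  braid i hi := (P.isDemazureLusztig i (by omega)).braid (P.isDemazureLusztig (i + 1) hi)
    (by simp) (by simp [Fin.ext_iff, add_assoc]) (by simp)
  rotate k hk := P.semiconjBy_rotAut_T hk
  pow_commute k hk := by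
    rw [autUnit_rotAut_pow]
    exact P.commute_eulerAut_T hk

theorem prod_Y : ((List.range n).map P.Y).prod = autOp (eulerAut n q) := by
  rw [funext P.Y_eq, ← autUnit_rotAut_pow]
  exact P.affineBraidRelations.prod_cherednikElement fun k hk => (P.T_inv k hk).1

lemma prod_Yi : (((List.range n).map P.Yi).reverse).prod = autOp (eulerAut n q)⁻¹ := by
  refine (left_inv_eq_right_inv ?_
    (prod_range_mul_prod_reverse_eq_one fun i hi => (P.Y_inv i hi).1)).symm
  rw [prod_Y, ← map_mul, inv_mul_cancel, map_one]

lemma zpowOp_prod_Y (m : ℤ) :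
    zpowOp ((List.range n).map P.Y).prod (((List.range n).map P.Yi).reverse).prod m
      = autOp (eulerAut n q ^ m) := by
  rw [prod_Y, prod_Yi, zpowOp_map]

end CentralElement

end PolynomialRep

section Degrees

variable {F : Type*} [Field F] {q : Fˣ}

lemma mulOp_mem_qCommutant {σ : Laur F n ≃ₐ[F] Laur F n} {x : Laur F n} {d : ℤ}
    (h : σ x = (↑(q ^ d) : F) • x) : mulOp x ∈ qCommutant (autUnit σ) q d :=
  mem_qCommutant.2 <| LinearMap.ext fun p =>
    (map_mul σ x p).trans (by rw [h, smul_mul_assoc]; rfl)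

lemma mulOp_Xel_mem_qCommutant_autUnit (i : Fin n) :
    mulOp (Xel i : Laur F n) ∈ qCommutant (autUnit (eulerAut n q)) q 1 :=
  mulOp_mem_qCommutant (by rw [eulerAut_Xel, zpow_one])

lemma mulOp_XinvEl_mem_qCommutant_autUnit (i : Fin n) :
    mulOp (XinvEl i : Laur F n) ∈ qCommutant (autUnit (eulerAut n q)) q (-1) :=
  mulOp_mem_qCommutant (by rw [XinvEl, eulerAut_mono, Finsupp.degree_single])

lemma commute_mulOp (x y : Laur F n) : Commute (mulOp x) (mulOp y) :=
  LinearMap.ext fun p => mul_left_comm x y p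

/-- Multiplication by the monomial `X^a`, as an invertible operator. -/
def monoUnit (F : Type*) [Field F] (a : Fin n →₀ ℤ) : (Module.End F (Laur F n))ˣ where
  val := mulOp (mono a 1)
  inv := mulOp (mono (-a) 1)
  val_inv := by rw [← mulOp_mul, mono_mul_mono_neg, mulOp_one]
  inv_val := by rw [← mulOp_mul, mul_comm, mono_mul_mono_neg, mulOp_one]

/-- Multiplication by `X_1 ⋯ X_n`, as an invertible operator. -/
def prodXUnit (F : Type*) [Field F] (n : ℕ) : (Module.End F (Laur F n))ˣ :=
  monoUnit F (Finsupp.equivFunOnFinite.symm 1)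

lemma rotAut_mem_qCommutant_prodXUnit [NeZero n] :
    autOp (rotAut n q) ∈ qCommutant (prodXUnit F n) q (-1) := by
  have hrot : rotAut n q (mono (Finsupp.equivFunOnFinite.symm 1) 1 : Laur F n)
      = (q : F) • mono (Finsupp.equivFunOnFinite.symm 1) 1 := by
    rw [rotAut_mono, domCongr_ones, Finsupp.equivFunOnFinite_symm_apply_apply, Pi.one_apply,
      zpow_one]
  refine mem_qCommutant.2 <| LinearMap.ext fun p => ?_
  change _ * rotAut n q p = (↑(q ^ (-1 : ℤ)) : F) • rotAut n q (_ * p)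
  rw [map_mul, hrot, smul_mul_assoc, smul_smul]
  simp

end Degrees

namespace PolynomialRep

variable {F : Type*} [Field F] [NeZero n] {q : Fˣ} {t : F} (P : PolynomialRep n q t)

lemma commute_prodXUnit_T {k : ℕ} (hk : k + 1 < n) :
    Commute (prodXUnit F n : Module.End F (Laur F n)) (P.T k) := by
  refine ((P.isDemazureLusztig k hk).commute_mulOp (by simp) ?_).symm
  rw [permAut_mono, domCongr_ones]

lemma glAlgebra_le_qGradedSubalgebra : P.glAlgebra ≤ qGradedSubalgebra (prodXUnit F n) q := by
  have hrot := rotAut_mem_qCommutant_prodXUnit (F := F) (n := n) (q := q)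
  refine P.glAlgebra_le (fun k hk => ?_) (fun x => ?_) ?_ ?_
  · exact qCommutant_le_qGradedSubalgebra (mem_qCommutant_zero.2 (P.commute_prodXUnit_T hk))
  · exact qCommutant_le_qGradedSubalgebra (mem_qCommutant_zero.2 (commute_mulOp _ x))
  · exact qCommutant_le_qGradedSubalgebra hrot
  · exact qCommutant_le_qGradedSubalgebra (mem_qCommutant_neg_of_mul_eq_one hrot
      (by rw [← map_mul, mul_inv_cancel, map_one]) (by rw [← map_mul, inv_mul_cancel, map_one]))

lemma Y_mem_qCommutant {i : ℕ} (hi : i < n) : P.Y i ∈ qCommutant (prodXUnit F n) q (-1) := by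
  have hT (k : ℕ) (hk : k + 1 < n) := P.commute_prodXUnit_T hk
  have hTi (k : ℕ) (hk : k + 1 < n) :
      Commute (prodXUnit F n : Module.End F (Laur F n)) (P.Ti k) := by
    rw [P.Ti_eq]
    exact (hT k hk).add_right ((Commute.one_right _).smul_right _)
  rw [P.Y_eq, cherednikElement, show (-1 : ℤ) = 0 + -1 + 0 by norm_num]
  exact mul_mem_qCommutant (mul_mem_qCommutant
    (mem_qCommutant_zero.2 (semiconjBy_aF fun k hk => hT _ (by omega)))
    rotAut_mem_qCommutant_prodXUnit)
    (mem_qCommutant_zero.2 (semiconjBy_aF fun k hk => hTi _ (by omega)))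

section Euler

lemma commute_eulerAut_rotAut : Commute (autOp (eulerAut n q)) (autOp (rotAut n q) :
    Module.End F (Laur F n)) := by
  rw [← rotAut_pow, map_pow]
  exact (Commute.refl _).pow_left n

lemma commute_eulerAut_Y {i : ℕ} (hi : i < n) : Commute (autOp (eulerAut n q)) (P.Y i) := by
  have hC {f : Module.End F (Laur F n)} :
      f ∈ Subalgebra.centralizer F {autOp (eulerAut n q)} ↔ Commute (autOp (eulerAut n q)) f := by
    simp [Subalgebra.mem_centralizer_iff, Commute, SemiconjBy]
  exact hC.1 (P.Y_mem (fun k hk => hC.2 (P.commute_eulerAut_T hk))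
    (hC.2 commute_eulerAut_rotAut) hi)

lemma commute_eulerAut_Yi {i : ℕ} (hi : i < n) : Commute (autOp (eulerAut n q)) (P.Yi i) :=
  Commute.units_inv_right (u := ⟨P.Y i, P.Yi i, (P.Y_inv i hi).1, (P.Y_inv i hi).2⟩)
    (P.commute_eulerAut_Y hi)

lemma D_mem_qCommutant_autUnit (j : ℕ) :
    P.D j ∈ qCommutant (autUnit (eulerAut n q)) q (-1) := by
  have hn : n - 1 < n := Nat.sub_one_lt (NeZero.ne n)
  have hXinv : (XinvOp (n - 1) : Module.End F (Laur F n)) ∈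
      qCommutant (autUnit (eulerAut n q)) q (-1) := by
    rw [XinvOp, dif_pos hn]
    exact mulOp_XinvEl_mem_qCommutant_autUnit _
  have haF : aF P.T j (n - 1 - j) ∈ qCommutant (autUnit (eulerAut n q)) q 0 :=
    mem_qCommutant_zero.2 (semiconjBy_aF fun k hk => P.commute_eulerAut_T (by omega))
  have hdF : dF P.T j (n - 1 - j) ∈ qCommutant (autUnit (eulerAut n q)) q 0 :=
    mem_qCommutant_zero.2 (semiconjBy_dF fun k hk => P.commute_eulerAut_T (by omega))
  have hY : P.Y (n - 1) - P.Yi (n - 1) ∈ qCommutant (autUnit (eulerAut n q)) q 0 :=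
    mem_qCommutant_zero.2 ((P.commute_eulerAut_Y hn).sub_right (P.commute_eulerAut_Yi hn))
  have hD := mul_mem_qCommutant (mul_mem_qCommutant haF (Submodule.smul_mem _
    ((q : F) - (q : F)⁻¹)⁻¹ (mul_mem_qCommutant hXinv hY))) hdF
  rwa [zero_add, add_zero, add_zero, ← P.D_eq] at hD

lemma commute_eulerAut_e {i : ℕ} (hi : i < n) (j : ℕ) :
    Commute (autOp (eulerAut n q)) (P.e i j) := by
  have hX : (XOp i : Module.End F (Laur F n)) ∈ qCommutant (autUnit (eulerAut n q)) q 1 := by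
    rw [XOp, dif_pos hi]
    exact mulOp_Xel_mem_qCommutant_autUnit _
  have he := mul_mem_qCommutant hX (P.D_mem_qCommutant_autUnit j)
  rwa [add_neg_cancel, ← P.e_eq, mem_qCommutant_zero] at he

theorem commute_eulerAut {g : Module.End F (Laur F n)} (hg : g ∈ P.glAlgebra) :
    Commute (autOp (eulerAut n q)) g := by
  refine Algebra.commute_of_mem_adjoin_of_forall_mem_commute hg ?_
  rintro _ (⟨k, hk, rfl⟩ | ⟨i, hi, rfl⟩ | ⟨i, hi, rfl⟩ | ⟨i, j, hi, -, -, rfl⟩)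
  · exact P.commute_eulerAut_T hk
  · exact P.commute_eulerAut_Y hi
  · exact P.commute_eulerAut_Yi hi
  · exact P.commute_eulerAut_e hi j

end Euler

end PolynomialRep

lemma eq_sum_smul_single_sub_single {ι : Type*} [Fintype ι] {a : ι →₀ ℤ} (ha : a.degree = 0)
    (j : ι) : a = ∑ i, a i • (Finsupp.single i 1 - Finsupp.single j 1) := by
  rw [Finsupp.degree_eq_sum] at ha
  simp only [smul_sub]
  rw [Finset.sum_sub_distrib, ← Finset.sum_smul, ha, zero_smul, sub_zero]
  simp only [Finsupp.smul_single_one, Finsupp.univ_sum_single]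

namespace PolynomialRep

variable {F : Type*} [Field F] [NeZero n] {q : Fˣ} {t : F} (P : PolynomialRep n q t)

section Lattice

variable {f : Module.End F (Laur F n)}

lemma e_last_eq {i : ℕ} (hi : i < n) (hn : n - 1 < n) :
    P.e i (n - 1) = ((q : F) - (q : F)⁻¹)⁻¹ • (mulOp
      (mono (Finsupp.single ⟨i, hi⟩ 1 - Finsupp.single ⟨n - 1, hn⟩ 1) 1)
        * (P.Y (n - 1) - P.Yi (n - 1))) := by
  rw [P.e_eq, P.D_eq, Nat.sub_self, aF_zero, dF_zero, one_mul, mul_one, mul_smul_comm, XOp,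
    dif_pos hi, XinvOp, dif_pos hn, ← mul_assoc, ← mulOp_mul, Xel, XinvEl, mono_mul_mono,
    mul_one, Finsupp.single_neg, ← sub_eq_add_neg]

variable (hq : Function.Injective fun d : ℤ => q ^ d)
  (hf : f ∈ P.glAlgebra) (hcomm : ∀ g ∈ P.glAlgebra, Commute f g)

include hq hf hcomm

lemma commute_mulOp_mono_single_sub_single_last (i : Fin n) (hn : n - 1 < n) : Commute f
    (mulOp (mono (Finsupp.single i 1 - Finsupp.single ⟨n - 1, hn⟩ 1) 1)) := by
  by_cases hi : (i : ℕ) = n - 1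
  · obtain rfl : i = ⟨n - 1, hn⟩ := Fin.ext hi
    rw [sub_self, mono_zero, mulOp_one]
    exact Commute.one_right f
  have hqq : (q : F) - (q : F)⁻¹ ≠ 0 := by
    intro h
    have h2 : (1 : ℤ) = -1 := hq <| Units.ext <| by simpa using sub_eq_zero.1 h
    omega
  have he := hcomm _ (P.e_mem_glAlgebra i.2 hn hi)
  rw [P.e_last_eq i.2 hn] at he
  exact commute_of_commute_mul_sub hq (P.glAlgebra_le_qGradedSubalgebra hf)
    (qCommutant_le_qGradedSubalgebra (mem_qCommutant_zero.2 (commute_mulOp _ _)))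
    (P.Y_mem_qCommutant hn) (by norm_num) (P.Y_inv _ hn).1 (P.Y_inv _ hn).2
    (hcomm _ (P.Y_mem_glAlgebra hn)) ((Commute.smul_right_iff₀ (inv_ne_zero hqq)).1 he)

theorem commute_mulOp_mono_of_degree_eq_zero {a : Fin n →₀ ℤ} (ha : a.degree = 0) :
    Commute f (mulOp (mono a 1)) := by
  let lattice : AddSubgroup (Fin n →₀ ℤ) :=
    { carrier := {b | Commute f (mulOp (mono b 1))}
      zero_mem' := by
        change Commute f (mulOp (mono 0 1))
        rw [mono_zero, mulOp_one]
        exact Commute.one_right f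
      add_mem' := fun {b c} hb hc => by
        change Commute f (mulOp (mono (b + c) 1))
        rw [mono_add, mulOp_mul]
        exact Commute.mul_right hb hc
      neg_mem' := fun {b} hb => Commute.units_inv_right (u := monoUnit F b) hb }
  suffices a ∈ lattice from this
  have hn : n - 1 < n := Nat.sub_one_lt (NeZero.ne n)
  rw [eq_sum_smul_single_sub_single ha ⟨n - 1, hn⟩]
  exact sum_mem fun i _ => zsmul_mem
    (P.commute_mulOp_mono_single_sub_single_last hq hf hcomm i hn) _

end Lattice

end PolynomialRep

section Permutations

variable {F : Type*} [Field F] {t : F} {i j : Fin n} {f T : Module.End F (Laur F n)}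

lemma IsDemazureLusztig.one_sub_mul_apply (hT : IsDemazureLusztig t i j T) (p : Laur F n) :
    (1 - mono (Finsupp.single i 1 - Finsupp.single j 1) 1) * T p
      = (t⁻¹ • 1 - t • mono (Finsupp.single i 1 - Finsupp.single j 1) 1)
          * permAut (Equiv.swap i j) p + (t - t⁻¹) • p := by
  have hXj : (Xel j : Laur F n) ≠ 0 := (isUnit_mono _).ne_zero
  have hXi : (Xel i : Laur F n) = Xel j * mono (Finsupp.single i 1 - Finsupp.single j 1) 1 := by
    rw [Xel, Xel, ← mono_add, add_sub_cancel]
  have hp := hT p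
  rw [hXi] at hp
  refine mul_left_cancel₀ hXj ?_
  simp only [Algebra.smul_def] at hp ⊢
  linear_combination hp

lemma IsDemazureLusztig.commute_permAut_swap (hT : IsDemazureLusztig t i j T) (hij : i ≠ j)
    (ht : t ≠ 0) (hfT : Commute f T)
    (hfX : Commute f (mulOp (mono (Finsupp.single i 1 - Finsupp.single j 1) 1))) :
    Commute f (autOp (permAut (Equiv.swap i j))) := by
  set x : Laur F n := mono (Finsupp.single i 1 - Finsupp.single j 1) 1 with hx
  have hne : t⁻¹ • 1 - t • x ≠ 0 := by
    intro h
    have hsmul : (t * t) • x = mono 0 1 := by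
      rw [mul_smul, ← sub_eq_zero.1 h, smul_smul, mul_inv_cancel₀ ht, one_smul, mono_zero]
    have hzero := (eq_and_eq_one_of_smul_mono_eq hsmul).1
    exact hij (Finsupp.single_left_injective one_ne_zero (sub_eq_zero.1 hzero))
  have hfx (p : Laur F n) : f (x * p) = x * f p := LinearMap.congr_fun hfX p
  have hfTp (p : Laur F n) : f (T p) = T (f p) := LinearMap.congr_fun hfT p
  refine LinearMap.ext fun p => mul_left_cancel₀ hne ?_
  have hp := congrArg f (hT.one_sub_mul_apply p)
  have hfp := hT.one_sub_mul_apply (f p)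
  rw [← hx] at hp hfp
  change _ * f (permAut (Equiv.swap i j) p) = _ * permAut (Equiv.swap i j) (f p)
  simp only [sub_mul, one_mul, smul_mul_assoc, map_sub, map_add, map_smul, hfx, hfTp] at hp hfp ⊢
  exact add_right_cancel (hp.symm.trans hfp)

end Permutations

namespace PolynomialRep

variable {F : Type*} [Field F] [NeZero n] {q : Fˣ} {t : F} (P : PolynomialRep n q t)
  {f : Module.End F (Laur F n)} (ht : t ≠ 0) (hq : Function.Injective fun d : ℤ => q ^ d)
  (hf : f ∈ P.glAlgebra) (hcomm : ∀ g ∈ P.glAlgebra, Commute f g)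

include ht hq hf hcomm

lemma commute_permAut (w : Equiv.Perm (Fin n)) : Commute f (autOp (permAut w)) := by
  obtain ⟨m, rfl⟩ : ∃ m, n = m + 1 := Nat.exists_eq_succ_of_ne_zero (NeZero.ne n)
  have hw : w ∈ Submonoid.closure (Set.range fun i : Fin m => Equiv.swap i.castSucc i.succ) := by
    rw [Equiv.Perm.mclosure_swap_castSucc_succ]
    trivial
  induction hw using Submonoid.closure_induction with
  | mem w hw =>
    obtain ⟨i, rfl⟩ := hw
    have hi : (i : ℕ) + 1 < m + 1 := by omega
    exact (P.isDemazureLusztig i hi).commute_permAut_swap (by simp) ht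
      (hcomm _ (P.T_mem_glAlgebra hi))
      (P.commute_mulOp_mono_of_degree_eq_zero hq hf hcomm (by simp))
  | one =>
    rw [map_one, map_one]
    exact Commute.one_right f
  | mul v w _ _ hv hw =>
    rw [map_mul, map_mul]
    exact hv.mul_right hw

lemma commute_scaleAut (i : Fin n) :
    Commute f (autOp (scaleAut q (Finsupp.applyAddHom i))) := by
  have hperm := P.commute_permAut ht hq hf hcomm
  have hfirst : (scaleAut q (Finsupp.applyAddHom 0) : Laur F n ≃ₐ[F] Laur F n)
      = permAut (finRotate n) * rotAut n q := by
    have hcancel : finRotate n * (finRotate n).symm = 1 := mul_inv_cancel (finRotate n)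
    rw [rotAut, ← mul_assoc, ← map_mul, hcancel, map_one, one_mul]
  have happly : (Finsupp.applyAddHom 0 : (Fin n →₀ ℤ) →+ ℤ).comp
      (Finsupp.domCongr (Equiv.swap 0 i) : _ ≃+ (Fin n →₀ ℤ)).toAddMonoidHom
        = Finsupp.applyAddHom i :=
    AddMonoidHom.ext fun a => congrArg a (Equiv.swap_apply_left 0 i)
  have hconj : (scaleAut q (Finsupp.applyAddHom i) : Laur F n ≃ₐ[F] Laur F n)
      = permAut (Equiv.swap 0 i) * scaleAut q (Finsupp.applyAddHom 0)
        * permAut (Equiv.swap 0 i) := by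
    rw [mul_assoc, scaleAut_mul_permAut, ← mul_assoc, ← map_mul, Equiv.swap_mul_self, map_one,
      one_mul, happly]
  rw [hconj, hfirst]
  simp only [map_mul]
  exact ((hperm _).mul_right ((hperm _).mul_right (hcomm _ P.rotAut_mem_glAlgebra))).mul_right
    (hperm _)

lemma exists_apply_mono_eq_smul (a : Fin n →₀ ℤ) : ∃ r : F, f (mono a 1) = r • mono a 1 := by
  refine exists_eq_smul_mono_of_scaleAut hq fun i => ?_
  have hi := LinearMap.congr_fun (P.commute_scaleAut ht hq hf hcomm i) (mono a 1)
  change f (scaleAut q _ (mono a 1)) = scaleAut q _ (f (mono a 1)) at hi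
  rw [← hi, scaleAut_mono, map_smul]
  rfl

end PolynomialRep

lemma IsDemazureLusztig.mem_skewStabilizer {F : Type*} [Field F] {q : Fˣ} {t : F} {i j : Fin n}
    {T : Module.End F (Laur F n)} (hT : IsDemazureLusztig t i j T) (hij : i ≠ j) :
    T ∈ skewStabilizer (monomialAutGroup F n q) :=
  mem_skewStabilizer_of_mul_eq (x := t⁻¹ • Xel j - t • Xel i) (y := (t - t⁻¹) • Xel j)
    (permAut_mem_monomialAutGroup q (Equiv.swap i j)) (Xel_sub_Xel_ne_zero hij) fun p => by
      rw [hT p, smul_mul_assoc _ (Xel j)]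

namespace PolynomialRep

variable {F : Type*} [Field F] [NeZero n] {q : Fˣ} {t : F} (P : PolynomialRep n q t)
  {f : Module.End F (Laur F n)}

section Center

lemma glAlgebra_le_skewStabilizer : P.glAlgebra ≤ skewStabilizer (monomialAutGroup F n q) :=
  P.glAlgebra_le (fun k hk => (P.isDemazureLusztig k hk).mem_skewStabilizer (by simp))
    mulLeft_mem_skewStabilizer (toLinearMap_mem_skewStabilizer (rotAut_mem_monomialAutGroup q))
    (toLinearMap_mem_skewStabilizer (inv_mem (rotAut_mem_monomialAutGroup q)))

theorem mem_span_eulerAut_zpow_of_commute (ht : t ≠ 0)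
    (hq : Function.Injective fun d : ℤ => q ^ d) (hf : f ∈ P.glAlgebra)
    (hcomm : ∀ g ∈ P.glAlgebra, Commute f g) :
    f ∈ Submodule.span F (Set.range fun m : ℤ => autOp (eulerAut n q ^ m)) := by
  obtain ⟨g, hgG, hg⟩ := exists_skew_expansion (P.glAlgebra_le_skewStabilizer hf)
  have heuler (σ : Laur F n ≃ₐ[F] Laur F n) (hσ : σ ∈ g.support) :
      ∃ m : ℤ, σ = eulerAut n q ^ m :=
    eq_eulerAut_zpow_of_fixes_degree_zero hq (hgG σ hσ) fun a ha => apply_eq_of_skew_expansion hg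
      (P.commute_mulOp_mono_of_degree_eq_zero hq hf hcomm ha) hσ
  choose! m hm using heuler
  obtain ⟨ret, hret⟩ := LinearMap.exists_leftInverse_of_injective
    (Algebra.linearMap F (FractionRing (Laur F n)))
    (LinearMap.ker_eq_bot.2 (algebraMap F (FractionRing (Laur F n))).injective)
  have hret_one : ret 1 = 1 := by simpa using LinearMap.congr_fun hret 1
  have hsum : f = ∑ σ ∈ g.support, ret (g σ) • autOp σ := by
    refine linearMap_ext_mono fun a => ?_
    obtain ⟨r, hr⟩ := P.exists_apply_mono_eq_smul ht hq hf hcomm a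
    rw [LinearMap.sum_apply]
    refine apply_eq_sum_smul_of_skew_expansion hg hret_one (isUnit_mono a).ne_zero hr
      (c := fun σ => ↑(q ^ (m σ * a.degree))) fun σ hσ => ?_
    conv_lhs => rw [hm σ hσ]
    exact eulerAut_zpow_mono q _ a
  rw [hsum]
  exact Submodule.sum_mem _ fun σ hσ => Submodule.smul_mem _ _
    (Submodule.subset_span ⟨m σ, congrArg autOp (hm σ hσ).symm⟩)

theorem commute_of_mem_span_eulerAut_zpow
    (hf : f ∈ Submodule.span F (Set.range fun m : ℤ => autOp (eulerAut n q ^ m)))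
    {g : Module.End F (Laur F n)} (hg : g ∈ P.glAlgebra) : Commute f g := by
  induction hf using Submodule.span_induction with
  | mem f hf =>
    obtain ⟨m, rfl⟩ := hf
    have hunit : Commute (autUnit (eulerAut n q) : Module.End F (Laur F n)) g :=
      P.commute_eulerAut hg
    have hpow := hunit.units_zpow_left m
    rwa [← map_zpow] at hpow
  | zero => exact Commute.zero_left g
  | add f f' _ _ hf hf' => exact hf.add_left hf'
  | smul c f _ hf => exact hf.smul_left c

end Center

end PolynomialRep

section Statement

lemma zpow_injective_of_pow_ne_one {F : Type*} [Field F] {q : F} (hq : q ≠ 0)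
    (hqroot : ∀ m : ℕ, m ≠ 0 → q ^ m ≠ 1) :
    Function.Injective fun d : ℤ => Units.mk0 q hq ^ d := by
  rw [injective_zpow_iff_not_isOfFinOrder, isOfFinOrder_iff_pow_eq_one]
  rintro ⟨m, hm, h⟩
  exact hqroot m hm.ne' (by simpa [Units.ext_iff] using h)

theorem statement12_general {F : Type*} [Field F] (n : ℕ) [NeZero n]
    (q : F) (hq : q ≠ 0) (hqroot : ∀ m : ℕ, m ≠ 0 → q ^ m ≠ 1) (t : F) (ht : t ≠ 0)
    (W : Equiv.Perm (Fin n) → Module.End F (Laur F n))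
    (hW : ∀ (w : Equiv.Perm (Fin n)) (v : Fin n →₀ ℤ) (r : F),
      W w (mono v r) = mono (Finsupp.equivMapDomain w v) r)
    (T Ti : ℕ → Module.End F (Laur F n))
    (hT : ∀ (k : ℕ) (hk : k + 1 < n) (p : Laur F n),
      (Xel ⟨k + 1, hk⟩ - Xel ⟨k, Nat.lt_of_succ_lt hk⟩) * T k p
        = (t⁻¹ • Xel ⟨k + 1, hk⟩ - t • Xel ⟨k, Nat.lt_of_succ_lt hk⟩)
            * W (Equiv.swap ⟨k, Nat.lt_of_succ_lt hk⟩ ⟨k + 1, hk⟩) p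
          + (t - t⁻¹) • (Xel ⟨k + 1, hk⟩ * p))
    (hTi : ∀ k, Ti k = T k + (t⁻¹ - t) • (1 : Module.End F (Laur F n)))
    (hTinv : ∀ k, k + 1 < n → T k * Ti k = 1 ∧ Ti k * T k = 1)
    (piInv : Module.End F (Laur F n))
    (hpiInv : ∀ (v : Fin n →₀ ℤ) (r : F),
      piInv (mono v r) = q ^ (v 0) • mono (Finsupp.equivMapDomain (finRotate n).symm v) r)
    (Y Yi : ℕ → Module.End F (Laur F n))
    (hY : ∀ i, Y i = aF T i (n - 1 - i) * piInv * aF Ti 0 i)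
    (hYinv : ∀ i, i < n → Y i * Yi i = 1 ∧ Yi i * Y i = 1)
    (D : ℕ → Module.End F (Laur F n))
    (hD : ∀ i, D i = aF T i (n - 1 - i)
      * ((q - q⁻¹)⁻¹ • (XinvOp (n - 1) * (Y (n - 1) - Yi (n - 1)))) * dF T i (n - 1 - i))
    (e : ℕ → ℕ → Module.End F (Laur F n)) (he : ∀ i j, e i j = XOp i * D j) :
    ∀ f ∈ Algebra.adjoin F (HglSet T Y Yi e),
      ((∀ g ∈ Algebra.adjoin F (HglSet T Y Yi e), f * g = g * f) ↔
        f ∈ Submodule.span F (Set.range fun m : ℤ =>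
          zpowOp ((List.range n).map Y).prod (((List.range n).map Yi).reverse).prod m)) := by
  obtain rfl : W = fun w => autOp (permAut w) :=
    funext fun w => linearMap_ext_mono fun a => (hW w a 1).trans (permAut_mono w a 1).symm
  obtain rfl : piInv = autOp (rotAut n (Units.mk0 q hq)) := linearMap_ext_mono fun a => by
    change _ = rotAut n (Units.mk0 q hq) (mono a 1)
    rw [hpiInv, rotAut_mono, Units.val_zpow_eq_zpow_val]
    rfl
  let P : PolynomialRep n (Units.mk0 q hq) t :=
    ⟨T, Ti, Y, Yi, D, e, hT, hTi, hTinv, hY, hYinv, hD, he⟩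
  intro f hf
  rw [show (fun m : ℤ => zpowOp ((List.range n).map Y).prod _ m) = _ from funext P.zpowOp_prod_Y]
  exact ⟨P.mem_span_eulerAut_zpow_of_commute ht (zpow_injective_of_pow_ne_one hq hqroot) hf,
    fun hspan g hg => P.commute_of_mem_span_eulerAut_zpow hspan hg⟩

end Statement

/-- Over the field `F = ℂ(τ)` (realised as `RatFunc ℂ`, with `τ = X`),
the centre of `ℍ^{gl_n}`: an element `f ∈ ℍ^{gl_n}` commutes with every element of
`ℍ^{gl_n}` iff `f` is an `F`-linear combination of the powers `Ỹ^m`, `m ∈ ℤ`, of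
`Ỹ = Y_1 ⋯ Y_n`. -/
theorem statement12
    (n : ℕ) [NeZero n]
    (q₀ : ℂ) (hq₀ : q₀ ≠ 0) (hq₀root : ∀ m : ℕ, m ≠ 0 → q₀ ^ m ≠ 1)
    -- the action of the symmetric group permuting the variables
    (W : Equiv.Perm (Fin n) → Module.End (RatFunc ℂ) (Laur (RatFunc ℂ) n))
    (hW : ∀ (w : Equiv.Perm (Fin n)) (v : Fin n →₀ ℤ) (r : (RatFunc ℂ)),
      W w (mono v r) = mono (Finsupp.equivMapDomain w v) r)
    -- the Demazure–Lusztig operators `T_k` and their inverses `Ti k = T k + τ⁻¹ - τ`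
    (T Ti : ℕ → Module.End (RatFunc ℂ) (Laur (RatFunc ℂ) n))
    (hT : ∀ (k : ℕ) (hk : k + 1 < n) (p : Laur (RatFunc ℂ) n),
      (Xel ⟨k + 1, hk⟩ - Xel ⟨k, Nat.lt_of_succ_lt hk⟩) * T k p
        = ((RatFunc.X : RatFunc ℂ)⁻¹ • Xel ⟨k + 1, hk⟩ - (RatFunc.X : RatFunc ℂ) • Xel ⟨k, Nat.lt_of_succ_lt hk⟩)
            * W (Equiv.swap ⟨k, Nat.lt_of_succ_lt hk⟩ ⟨k + 1, hk⟩) p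
          + ((RatFunc.X : RatFunc ℂ) - (RatFunc.X : RatFunc ℂ)⁻¹) • (Xel ⟨k + 1, hk⟩ * p))
    (hTi : ∀ k, Ti k = T k + ((RatFunc.X : RatFunc ℂ)⁻¹ - (RatFunc.X : RatFunc ℂ)) • (1 : Module.End (RatFunc ℂ) (Laur (RatFunc ℂ) n)))
    (hTinv : ∀ k, k + 1 < n → T k * Ti k = 1 ∧ Ti k * T k = 1)
    -- the operator `π⁻¹`
    (piInv : Module.End (RatFunc ℂ) (Laur (RatFunc ℂ) n))
    (hpiInv : ∀ (v : Fin n →₀ ℤ) (r : (RatFunc ℂ)),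
      piInv (mono v r)
        = (algebraMap ℂ (RatFunc ℂ) q₀) ^ (v 0) • mono (Finsupp.equivMapDomain (finRotate n).symm v) r)
    -- the operators `Y_i = T_i ⋯ T_{n-1} ⬝ π⁻¹ ⬝ T_1⁻¹ ⋯ T_{i-1}⁻¹` and their inverses
    (Y Yi : ℕ → Module.End (RatFunc ℂ) (Laur (RatFunc ℂ) n))
    (hY : ∀ i, Y i = aF T i (n - 1 - i) * piInv * aF Ti 0 i)
    (hYinv : ∀ i, i < n → Y i * Yi i = 1 ∧ Yi i * Y i = 1)
    -- the `q`-Dunkl-type operators `D_i`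
    (D : ℕ → Module.End (RatFunc ℂ) (Laur (RatFunc ℂ) n))
    (hD : ∀ i, D i = aF T i (n - 1 - i)
        * (((algebraMap ℂ (RatFunc ℂ) q₀) - (algebraMap ℂ (RatFunc ℂ) q₀)⁻¹)⁻¹ • (XinvOp (n - 1) * (Y (n - 1) - Yi (n - 1))))
        * dF T i (n - 1 - i))
    -- the operators `e_{ij} = X_i · D_j`
    (e : ℕ → ℕ → Module.End (RatFunc ℂ) (Laur (RatFunc ℂ) n))
    (he : ∀ i j, e i j = XOp i * D j)
    :
    ∀ f ∈ Algebra.adjoin (RatFunc ℂ) (HglSet T Y Yi e),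
      ((∀ g ∈ Algebra.adjoin (RatFunc ℂ) (HglSet T Y Yi e), f * g = g * f) ↔
        f ∈ Submodule.span (RatFunc ℂ) (Set.range fun m : ℤ =>
              zpowOp (((List.range n).map Y).prod)
                ((((List.range n).map Yi).reverse).prod) m)) := by
  have hinj := (algebraMap ℂ (RatFunc ℂ)).injective
  exact statement12_general n _ ((map_ne_zero _).2 hq₀)
    (fun m hm h => hq₀root m hm (hinj (by simpa using h))) RatFunc.X RatFunc.X_ne_zero
    W hW T Ti hT hTi hTinv piInv hpiInv Y Yi hY hYinv D hD e he
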